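/- arXiv:1304.3031 — 10 statements merged into one kernel-verified Lean document; each statement's English description precedes it below -/
import Mathlib

section
/- For every integer n ≥ 2, the negative logarithm of the product over positive roots of SU(n) of normalized sines equals the universal integral: -ln ∏_{1≤i<j≤n} [sin(π(j-i)/n) / (π(j-i)/n)] = ∫₀^∞ ((cosh x - 1)/(2 sinh²(x/(2n))) - n²) / (x(eˣ - 1)) dx. -/
/-!
Put `y = x / n`. Expanding `(∑_{i=1}^n e^{iy}) (∑_{j=1}^n e^{-jy})` and summing the two geometric
series gives the finite identity
`(cosh x - 1) / (2 sinh² (y / 2)) - n² = ∑_{1 ≤ i < j ≤ n} 2 (cosh ((j - i) y) - 1)`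
(`cosh_kernel_eq_sum`), so the integrand is a finite sum of the kernels
`2 (cosh (a x) - 1) / (x (eˣ - 1))` with `a = (j - i) / n ∈ (0, 1)`.

For one such `a`, expand `1 / (eˣ - 1) = ∑_{m ≥ 1} e^{-mx}`. Each term integrates to
`-log (1 - a² / m²)` by two applications of Frullani's integral, all terms are nonnegative so that
sum and integral may be exchanged, and Euler's sine product sums the result to
`-log (sin (π a) / (π a))` (`integral_kernel`).
-/

open Real Set Filter Topology MeasureTheory

/-- Frullani's integral for the exponential, together with integrability of the integrand. -/
lemma frullani_exp {p q : ℝ} (hp : 0 < p) (hpq : p ≤ q) :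
    IntegrableOn (fun x : ℝ => x⁻¹ * (exp (-(p * x)) - exp (-(q * x)))) (Ioi 0) ∧
      ∫ x in Ioi (0 : ℝ), x⁻¹ * (exp (-(p * x)) - exp (-(q * x))) = log (q / p) := by
  have hint : IntegrableOn (fun x : ℝ => x⁻¹ * (exp (-(p * x)) - exp (-(q * x)))) (Ioi 0) := by
    have hdom : IntegrableOn (fun x : ℝ => (q - p) * exp (-p * x)) (Ioi 0) :=
      (integrableOn_exp_mul_Ioi (neg_lt_zero.2 hp) 0).const_mul (q - p)
    refine Integrable.mono' hdom (by fun_prop) ?_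
    filter_upwards [ae_restrict_mem measurableSet_Ioi] with x hx
    have hx : 0 < x := hx
    have hfac : exp (-(q * x)) = exp (-p * x) * exp (-((q - p) * x)) := by
      rw [← exp_add]; ring_nf
    have hle : exp (-(q * x)) ≤ exp (-(p * x)) := exp_le_exp.2 (by nlinarith)
    rw [Real.norm_of_nonneg (mul_nonneg (by positivity) (by linarith)), inv_mul_le_iff₀ hx]
    have h1 := add_one_le_exp (-((q - p) * x))
    rw [hfac, show -(p * x) = -p * x by ring]
    nlinarith [exp_pos (-p * x)]
  refine ⟨hint, ?_⟩
  have h := Frullani.integral_Ioi_eq (f := fun x : ℝ => exp (-x)) (a := p) (b := q) (L := 1)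
    (R := 0) ((by fun_prop : Continuous fun x : ℝ => exp (-x)).locallyIntegrable.locallyIntegrableOn _)
    hp (hp.trans_le hpq)
    (by
      have : Tendsto (fun x : ℝ => exp (-x)) (𝓝 0) (𝓝 (exp (-0))) :=
        (by fun_prop : Continuous fun x : ℝ => exp (-x)).tendsto 0
      rw [neg_zero, exp_zero] at this
      exact this.mono_left nhdsWithin_le_nhds)
    Real.tendsto_exp_neg_atTop_nhds_zero hint
  simpa using h

/-- The logarithm of Euler's sine product; nonnegativity of the terms makes the limit of partial
sums an unconditional sum. -/
lemma hasSum_log_sine {a : ℝ} (h0 : 0 < a) (h1 : a < 1) :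
    HasSum (fun j : ℕ => -log (1 - a ^ 2 / ((j : ℝ) + 1) ^ 2)) (-log (sin (π * a) / (π * a))) := by
  have hpos : ∀ j : ℕ, 0 < 1 - a ^ 2 / ((j : ℝ) + 1) ^ 2 := by
    intro j
    rw [sub_pos, div_lt_one (by positivity)]
    have : (0 : ℝ) ≤ j := by positivity
    nlinarith
  rw [hasSum_iff_tendsto_nat_of_nonneg]
  · have hs : 0 < sin (π * a) := sin_pos_of_pos_of_lt_pi (by positivity) (by nlinarith [pi_pos])
    have hpa : 0 < π * a := by positivity
    have h := ((tendsto_euler_sin_prod a).div_const (π * a)).log (div_pos hs hpa).ne'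
    refine h.neg.congr fun n => ?_
    rw [mul_div_cancel_left₀ _ hpa.ne', log_prod fun j _ => (hpos j).ne', Finset.sum_neg_distrib]
  · intro j
    rw [neg_nonneg]
    exact log_nonpos (hpos j).le (by linarith [show 0 ≤ a ^ 2 / ((j : ℝ) + 1) ^ 2 by positivity])

lemma integral_term {a m : ℝ} (h0 : 0 < a) (h1 : a < m) :
    IntegrableOn (fun x : ℝ => 2 * (cosh (a * x) - 1) / x * exp (-(m * x))) (Ioi 0) ∧
      ∫ x in Ioi (0 : ℝ), 2 * (cosh (a * x) - 1) / x * exp (-(m * x)) =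
        -log (1 - a ^ 2 / m ^ 2) := by
  have hm : 0 < m := h0.trans h1
  obtain ⟨i1, e1⟩ := frullani_exp (p := m - a) (q := m) (by linarith) (by linarith)
  obtain ⟨i2, e2⟩ := frullani_exp (p := m) (q := m + a) (by linarith) (by linarith)
  have hf : (fun x : ℝ => 2 * (cosh (a * x) - 1) / x * exp (-(m * x))) = fun x =>
      x⁻¹ * (exp (-((m - a) * x)) - exp (-(m * x))) -
        x⁻¹ * (exp (-(m * x)) - exp (-((m + a) * x))) := by
    funext x
    rw [cosh_eq, show -((m - a) * x) = a * x + -(m * x) by ring,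
      show -((m + a) * x) = -(a * x) + -(m * x) by ring, exp_add, exp_add]
    ring
  rw [hf]
  refine ⟨i1.sub i2, ?_⟩
  rw [integral_sub i1 i2, e1, e2, ← log_inv (1 - _), ← log_div]
  · congr 1
    have : m - a ≠ 0 := by linarith
    have : m + a ≠ 0 := by linarith
    have : m ^ 2 - a ^ 2 ≠ 0 := by nlinarith
    field_simp
    ring
  · exact (div_pos hm (by linarith)).ne'
  · exact (div_pos (by linarith) hm).ne'

lemma hasSum_exp_neg {x : ℝ} (hx : 0 < x) :
    HasSum (fun j : ℕ => exp (-(((j : ℝ) + 1) * x))) (exp x - 1)⁻¹ := by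
  have h1 : exp (-x) < 1 := by rw [exp_lt_one_iff]; linarith
  have h := (hasSum_geometric_of_lt_one (exp_pos (-x)).le h1).mul_left (exp (-x))
  have h2 : exp x - 1 ≠ 0 := by linarith [add_one_lt_exp hx.ne']
  convert! h using 1
  · funext j
    rw [← exp_nat_mul, ← exp_add]
    ring_nf
  · rw [exp_neg] at h1 ⊢
    have : 1 - (exp x)⁻¹ ≠ 0 := by linarith
    field_simp

/-- The universal integral attached to a single ratio `a ∈ (0, 1)`. -/
lemma integral_kernel {a : ℝ} (h0 : 0 < a) (h1 : a < 1) :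
    IntegrableOn (fun x : ℝ => 2 * (cosh (a * x) - 1) / (x * (exp x - 1))) (Ioi 0) ∧
      ∫ x in Ioi (0 : ℝ), 2 * (cosh (a * x) - 1) / (x * (exp x - 1)) =
        -log (sin (π * a) / (π * a)) := by
  have hlt (j : ℕ) : a < (j : ℝ) + 1 := by linarith [show (0 : ℝ) ≤ j by positivity]
  have hnorm (j : ℕ) :
      ∫ x in Ioi (0 : ℝ), ‖2 * (cosh (a * x) - 1) / x * exp (-(((j : ℝ) + 1) * x))‖ =
        -log (1 - a ^ 2 / ((j : ℝ) + 1) ^ 2) := by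
    rw [← (integral_term h0 (hlt j)).2]
    refine setIntegral_congr_fun measurableSet_Ioi fun x hx => ?_
    have hx : 0 < x := hx
    have := one_le_cosh (a * x)
    exact Real.norm_of_nonneg
      (mul_nonneg (div_nonneg (by linarith) hx.le) (exp_pos _).le)
  have hsum := hasSum_log_sine h0 h1
  have h := hasSum_integral_of_summable_integral_norm
    (fun j : ℕ => (integral_term h0 (hlt j)).1) (by simpa only [hnorm] using hsum.summable)
  simp only [fun j : ℕ => (integral_term h0 (hlt j)).2] at h
  have heq : ∫ x in Ioi (0 : ℝ), 2 * (cosh (a * x) - 1) / (x * (exp x - 1)) =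
      -log (sin (π * a) / (π * a)) := by
    rw [← h.unique hsum]
    refine setIntegral_congr_fun measurableSet_Ioi fun x hx => ?_
    have h := ((hasSum_exp_neg hx).mul_left (2 * (cosh (a * x) - 1) / x)).tsum_eq
    rw [div_mul_eq_div_div, div_eq_mul_inv _ (exp x - 1)]
    exact h.symm
  refine ⟨?_, heq⟩
  -- A non-integrable function has Bochner integral `0`, whereas the value found is positive.
  have hpa : 0 < π * a := by positivity
  have hs : 0 < sin (π * a) := sin_pos_of_pos_of_lt_pi hpa (by nlinarith [pi_pos])
  refine not_imp_comm.1 integral_undef ?_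
  rw [heq]
  exact neg_ne_zero.2 (log_neg (div_pos hs hpa) ((div_lt_one hpa).2 (sin_lt hpa))).ne

/-- Expansion of `(∑ e^{iy}) (∑ e^{-jy})` into diagonal and off-diagonal terms. -/
lemma sum_cosh_eq (y : ℝ) (n : ℕ) :
    (n : ℝ) + ∑ i ∈ Finset.Icc 1 n, ∑ j ∈ Finset.Ioc i n, 2 * cosh (((j : ℝ) - i) * y) =
      (∑ i ∈ Finset.Icc 1 n, exp (i * y)) * ∑ i ∈ Finset.Icc 1 n, exp (-(i * y)) := by
  induction n with
  | zero => simp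
  | succ n ih =>
    have hstep : ∑ i ∈ Finset.Icc 1 n, ∑ j ∈ Finset.Ioc i (n + 1), 2 * cosh (((j : ℝ) - i) * y) =
        (∑ i ∈ Finset.Icc 1 n, ∑ j ∈ Finset.Ioc i n, 2 * cosh (((j : ℝ) - i) * y)) +
          ((∑ i ∈ Finset.Icc 1 n, exp (-(i * y))) * exp (((n + 1 : ℕ) : ℝ) * y) +
            (∑ i ∈ Finset.Icc 1 n, exp (i * y)) * exp (-(((n + 1 : ℕ) : ℝ) * y))) := by
      rw [Finset.sum_mul, Finset.sum_mul, ← Finset.sum_add_distrib, ← Finset.sum_add_distrib]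
      refine Finset.sum_congr rfl fun i hi => ?_
      rw [Finset.sum_Ioc_succ_top (Finset.mem_Icc.1 hi).2, ← exp_add, ← exp_add,
        show -(i * y) + ((n + 1 : ℕ) : ℝ) * y = (((n + 1 : ℕ) : ℝ) - i) * y by ring,
        show i * y + -(((n + 1 : ℕ) : ℝ) * y) = -((((n + 1 : ℕ) : ℝ) - i) * y) by ring,
        cosh_eq ((((n + 1 : ℕ) : ℝ) - i) * y)]
      ring
    have hdiag : exp (((n + 1 : ℕ) : ℝ) * y) * exp (-(((n + 1 : ℕ) : ℝ) * y)) = 1 := by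
      rw [← exp_add, add_neg_cancel, exp_zero]
    simp only [Finset.sum_Icc_succ_top (Nat.le_add_left 1 n)]
    rw [hstep, Finset.Ioc_self, Finset.sum_empty]
    push_cast at hdiag ⊢
    linear_combination ih - hdiag

lemma sum_exp_mul (y : ℝ) (n : ℕ) :
    (∑ i ∈ Finset.Icc 1 n, exp (i * y)) * (exp y - 1) = exp y * (exp (n * y) - 1) := by
  induction n with
  | zero => simp
  | succ n ih =>
    rw [Finset.sum_Icc_succ_top (Nat.le_add_left 1 n), add_mul, ih]
    push_cast
    rw [add_mul, one_mul, exp_add]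
    ring

lemma cosh_kernel_eq_sum {n : ℕ} (hn : n ≠ 0) {x : ℝ} (hx : x ≠ 0) :
    (cosh x - 1) / (2 * sinh (x / (2 * n)) ^ 2) - (n : ℝ) ^ 2 =
      ∑ i ∈ Finset.Icc 1 n, ∑ j ∈ Finset.Ioc i n,
        2 * (cosh (((j : ℝ) - i) / n * x) - 1) := by
  have hn' : (n : ℝ) ≠ 0 := by exact_mod_cast hn
  obtain ⟨y, rfl⟩ : ∃ y, x = n * y := ⟨x / n, by field_simp⟩
  have hy : y ≠ 0 := right_ne_zero_of_mul hx
  have hden : 2 * sinh (n * y / (2 * n)) ^ 2 = cosh y - 1 := by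
    have h2 : n * y / (2 * n) = y / 2 := by field_simp
    have h := cosh_two_mul (y / 2)
    rw [mul_div_cancel₀ y two_ne_zero, cosh_sq] at h
    rw [h2, h]
    ring
  have hc : cosh y - 1 ≠ 0 := (sub_pos.2 (one_lt_cosh.2 hy)).ne'
  -- The value `y = 0` counts the pairs `i < j`.
  have hcount := sum_cosh_eq 0 n
  have hsum := sum_cosh_eq y n
  have hA := sum_exp_mul y n
  have hB := sum_exp_mul (-y) n
  simp only [mul_neg] at hB
  simp only [mul_zero, neg_zero, cosh_zero, exp_zero, mul_one, Finset.sum_const, Nat.card_Icc,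
    nsmul_eq_mul, Nat.add_sub_cancel] at hcount
  have hAB : (∑ i ∈ Finset.Icc 1 n, exp (i * y)) * (∑ i ∈ Finset.Icc 1 n, exp (-(i * y))) *
      (cosh y - 1) = cosh (n * y) - 1 := by
    have e1 : exp y * exp (-y) = 1 := by rw [← exp_add, add_neg_cancel, exp_zero]
    have e2 : exp (n * y) * exp (-(n * y)) = 1 := by rw [← exp_add, add_neg_cancel, exp_zero]
    have hprod := congrArg₂ (· * ·) hA hB
    rw [cosh_eq, cosh_eq]
    generalize (∑ i ∈ Finset.Icc 1 n, exp (i * y)) = A at *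
    generalize (∑ i ∈ Finset.Icc 1 n, exp (-(i * y))) = B at *
    generalize exp y = u at *
    generalize exp (-y) = v at *
    generalize exp (n * y) = U at *
    generalize exp (-(n * y)) = V at *
    linear_combination (-1 / 2) * hprod + (A * B / 2 - (U - 1) * (V - 1) / 2) * e1 - (1 / 2) * e2
  have hrw : ∀ i j : ℕ, 2 * (cosh (((j : ℝ) - i) / n * (n * y)) - 1) =
      2 * cosh (((j : ℝ) - i) * y) - 2 := by
    intro i j
    rw [show ((j : ℝ) - i) / n * (n * y) = ((j : ℝ) - i) * y by field_simp]
    ring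
  simp only [hrw, Finset.sum_sub_distrib]
  rw [hden, ← hAB, mul_div_cancel_right₀ _ hc, ← hsum]
  simp only [Finset.sum_const, nsmul_eq_mul]
  linear_combination hcount

theorem su_n_sine_product_eq_universal_integral (n : ℕ) (hn : 2 ≤ n) :
    -Real.log (∏ i ∈ Finset.Icc 1 n, ∏ j ∈ Finset.Ioc i n,
        Real.sin (π * ((j : ℝ) - i) / n) / (π * ((j : ℝ) - i) / n)) =
      ∫ x in Ioi (0 : ℝ),
        ((Real.cosh x - 1) / (2 * Real.sinh (x / (2 * n)) ^ 2) - (n : ℝ) ^ 2) /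
          (x * (Real.exp x - 1)) := by
  have hn0 : (0 : ℝ) < n := by exact_mod_cast (by omega : 0 < n)
  have hmem : ∀ i ∈ Finset.Icc 1 n, ∀ j ∈ Finset.Ioc i n,
      0 < ((j : ℝ) - i) / n ∧ ((j : ℝ) - i) / n < 1 := by
    intro i hi j hj
    rw [Finset.mem_Icc] at hi
    rw [Finset.mem_Ioc] at hj
    have h1 : (1 : ℝ) ≤ i := by exact_mod_cast hi.1
    have h2 : (i : ℝ) < j := by exact_mod_cast hj.1
    have h3 : (j : ℝ) ≤ n := by exact_mod_cast hj.2
    exact ⟨div_pos (by linarith) hn0, (div_lt_one hn0).2 (by linarith)⟩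
  have hne : ∀ i ∈ Finset.Icc 1 n, ∀ j ∈ Finset.Ioc i n,
      sin (π * (((j : ℝ) - i) / n)) / (π * (((j : ℝ) - i) / n)) ≠ 0 := by
    intro i hi j hj
    obtain ⟨h0, h1⟩ := hmem i hi j hj
    have hpa := mul_pos pi_pos h0
    exact (div_pos (sin_pos_of_pos_of_lt_pi hpa (by nlinarith [pi_pos])) hpa).ne'
  have hint : ∫ x in Ioi (0 : ℝ),
        ((Real.cosh x - 1) / (2 * Real.sinh (x / (2 * n)) ^ 2) - (n : ℝ) ^ 2) /
          (x * (Real.exp x - 1)) =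
      ∫ x in Ioi (0 : ℝ), ∑ i ∈ Finset.Icc 1 n, ∑ j ∈ Finset.Ioc i n,
        2 * (cosh (((j : ℝ) - i) / n * x) - 1) / (x * (exp x - 1)) := by
    refine setIntegral_congr_fun measurableSet_Ioi fun x hx => ?_
    have hx : 0 < x := hx
    simp only [← Finset.sum_div]
    rw [cosh_kernel_eq_sum (by omega) hx.ne']
  simp only [mul_div_assoc] at hne ⊢
  rw [hint, integral_finsetSum _ fun i hi => integrable_finsetSum _ fun j hj =>
      (integral_kernel (hmem i hi j hj).1 (hmem i hi j hj).2).1,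
    log_prod fun i hi => Finset.prod_ne_zero_iff.2 (hne i hi), ← Finset.sum_neg_distrib]
  refine Finset.sum_congr rfl fun i hi => ?_
  rw [integral_finsetSum _ fun j hj =>
      (integral_kernel (hmem i hi j hj).1 (hmem i hi j hj).2).1,
    log_prod (hne i hi), ← Finset.sum_neg_distrib]
  exact Finset.sum_congr rfl fun j hj =>
    (integral_kernel (hmem i hi j hj).1 (hmem i hi j hj).2).2.symm
end

section
/- For every integer n ≥ 2, ∫₀^∞ ((cosh x - 1)/(2 sinh²(x/(2n))) - n²) / (x(eˣ - 1)) dx = ln(∏_{k=1}^{n-1} k!) - (n²/2)·ln n + ((n² - n)/2)·ln(2π). -/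
/-!
Put `n = N + 1`. Expanding the square of the Dirichlet-type quotient
`sinh (n y) / sinh y` at `y = x / (2 n)` gives the Fejér-type identity
`(cosh x - 1) / (2 sinh² (x / (2 n))) - n² = ∑_{i < N} (N - i) (2 cosh ((i + 1) x / n) - 2)`
(`fejer_sinh`), so the integral is a finite combination of
`J a = ∫₀^∞ (2 cosh (a x) - 2) / (x (eˣ - 1)) dx` with `0 < a < 1`.

Expanding `1 / (eˣ - 1)` into a geometric series and `cosh` into its power series, both with
nonnegative terms, gives `J a = -∑_{m ≥ 1} log (1 - a² / m²)`, which is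
`log (π a / sin (π a))` by Euler's product for the sine (`integral_cosh_sub_two`).

It remains to evaluate `∑_{i < N} (N - i) log (π a / sin (π a))` at `a = (i + 1) / n`. The weights
`N - i` turn the `log (i + 1)` into the logarithm of the superfactorial
(`log_superfactorial`), and, because `sin (π a)` is invariant under `a ↦ 1 - a`, they may be replaced
by their mean `n / 2` on the sine part, where `∏ 2 sin (π k / n) = n` applies (`sum_log_sin`).
-/

open Real Set
open MeasureTheory Filter Topology

/-- Term by term integration of a series of nonnegative functions with nonzero integrals.
Integrability of the terms need not be assumed: it follows from the integrals being nonzero. -/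
lemma setIntegral_of_hasSum_nonneg {F : ℕ → ℝ → ℝ} {f : ℝ → ℝ} {c : ℕ → ℝ} {C : ℝ}
    (hF0 : ∀ i, ∀ x ∈ Ioi (0 : ℝ), 0 ≤ F i x)
    (hFf : ∀ x ∈ Ioi (0 : ℝ), HasSum (fun i => F i x) (f x))
    (hFc : ∀ i, ∫ x in Ioi (0 : ℝ), F i x = c i)
    (hc : ∀ i, 0 < c i) (hC : HasSum c C) :
    ∫ x in Ioi (0 : ℝ), f x = C := by
  have hint : ∀ i, Integrable (F i) (volume.restrict (Ioi (0 : ℝ))) := fun i =>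
    Integrable.of_integral_ne_zero (by rw [hFc i]; exact (hc i).ne')
  have hn : ∀ i, ∫ x in Ioi (0 : ℝ), ‖F i x‖ = c i := fun i => by
    rw [← hFc i]
    exact setIntegral_congr_fun measurableSet_Ioi fun x hx => Real.norm_of_nonneg (hF0 i x hx)
  have h := hasSum_integral_of_summable_integral_norm hint (by simpa only [hn] using hC.summable)
  simp only [hFc] at h
  rw [← h.unique hC]
  exact setIntegral_congr_fun measurableSet_Ioi fun x hx => ((hFf x hx).tsum_eq).symm

lemma integral_pow_mul_exp_neg (b : ℝ) (hb : 0 < b) (k : ℕ) :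
    ∫ x in Ioi (0 : ℝ), x ^ k * rexp (-(b * x)) = (1 / b) ^ (k + 1) * (k.factorial : ℝ) := by
  have h := Real.integral_rpow_mul_exp_neg_mul_Ioi (a := (k : ℝ) + 1) (r := b) (by positivity) hb
  rw [Real.Gamma_nat_eq_factorial] at h
  simp only [add_sub_cancel_right, Real.rpow_natCast] at h
  rw [h, ← Nat.cast_add_one, Real.rpow_natCast]

/-- The Frullani-type integral obtained from the term `e^{-bx}` of the geometric series. -/
lemma integral_cosh_mul_exp (a b : ℝ) (ha : 0 < a) (hab : a < b) :
    ∫ x in Ioi (0 : ℝ), (2 * Real.cosh (a * x) - 2) / x * rexp (-(b * x))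
      = -Real.log (1 - a ^ 2 / b ^ 2) := by
  have hb : 0 < b := ha.trans hab
  have hq : a ^ 2 / b ^ 2 < 1 := by
    rw [div_lt_one (by positivity)]
    exact pow_lt_pow_left₀ hab ha.le (by norm_num)
  refine setIntegral_of_hasSum_nonneg
    (F := fun k x => 2 * a ^ (2 * (k + 1)) / ((2 * (k + 1)).factorial : ℝ)
      * (x ^ (2 * k + 1) * rexp (-(b * x))))
    (c := fun k => (a ^ 2 / b ^ 2) ^ (k + 1) / ((k : ℝ) + 1)) ?_ ?_ ?_ ?_ ?_
  · intro k x hx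
    have : 0 < x := hx
    positivity
  · intro x hx
    have hx0 : x ≠ 0 := (show 0 < x from hx).ne'
    have h := (hasSum_nat_add_iff' 1).2 (Real.hasSum_cosh (a * x))
    have h2 := (h.mul_left 2).mul_right (1 / x * rexp (-(b * x)))
    convert! h2 using 1
    · funext k
      rw [mul_pow, show 2 * (k + 1) = (2 * k + 1) + 1 by ring, pow_succ x]
      field_simp
      ring
    · simp
      ring
  · intro k
    rw [integral_const_mul, integral_pow_mul_exp_neg b hb]
    rw [show 2 * (k + 1) = (2 * k + 1) + 1 by ring, Nat.factorial_succ]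
    have : ((2 * k + 1).factorial : ℝ) ≠ 0 := by positivity
    push_cast
    rw [div_pow, div_pow, ← pow_mul, ← pow_mul, show 2 * (k + 1) = (2 * k + 1) + 1 by ring]
    field_simp
    ring
  · intro k
    positivity
  · exact Real.hasSum_pow_div_log_of_abs_lt_one (by rwa [abs_of_nonneg (by positivity)])

/-- Logarithmic form of Euler's product for the sine. -/
lemma hasSum_log_sin (a : ℝ) (ha : 0 < a) (ha1 : a < 1) :
    HasSum (fun m : ℕ => -Real.log (1 - a ^ 2 / ((m : ℝ) + 1) ^ 2))
      (Real.log (π * a / Real.sin (π * a))) := by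
  have hq : ∀ m : ℕ, a ^ 2 / ((m : ℝ) + 1) ^ 2 < 1 := fun m => by
    rw [div_lt_one (by positivity)]
    refine pow_lt_pow_left₀ ?_ ha.le (by norm_num)
    have : (0 : ℝ) ≤ m := by positivity
    linarith
  have hs : 0 < Real.sin (π * a) :=
    Real.sin_pos_of_pos_of_lt_pi (by positivity) (by nlinarith [Real.pi_pos])
  rw [hasSum_iff_tendsto_nat_of_nonneg]
  · have h := ((Real.tendsto_euler_sin_prod a).log hs.ne').const_sub (Real.log (π * a))
    rw [← Real.log_div (by positivity) hs.ne'] at h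
    refine h.congr fun n => ?_
    have hne : ∀ j ∈ Finset.range n, (1 : ℝ) - a ^ 2 / ((j : ℝ) + 1) ^ 2 ≠ 0 :=
      fun j _ => (sub_pos.2 (hq j)).ne'
    rw [Real.log_mul (by positivity) (Finset.prod_ne_zero_iff.2 hne), Real.log_prod hne,
      Finset.sum_neg_distrib]
    ring
  · intro m
    have h0 : 0 ≤ a ^ 2 / ((m : ℝ) + 1) ^ 2 := by positivity
    exact neg_nonneg.2 (Real.log_nonpos (sub_pos.2 (hq m)).le (by linarith))

lemma integral_cosh_sub_two (a : ℝ) (ha : 0 < a) (ha1 : a < 1) :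
    ∫ x in Ioi (0 : ℝ), (2 * Real.cosh (a * x) - 2) / (x * (rexp x - 1))
      = Real.log (π * a / Real.sin (π * a)) := by
  refine setIntegral_of_hasSum_nonneg
    (F := fun m x => (2 * Real.cosh (a * x) - 2) / x * rexp (-(((m : ℝ) + 1) * x)))
    (c := fun m => -Real.log (1 - a ^ 2 / ((m : ℝ) + 1) ^ 2)) ?_ ?_ ?_ ?_
    (hasSum_log_sin a ha ha1)
  · intro m x hx
    have : 0 < x := hx
    have h1 := Real.one_le_cosh (a * x)
    have : 0 ≤ 2 * Real.cosh (a * x) - 2 := by linarith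
    positivity
  · intro x hx
    have hx0 : 0 < x := hx
    have h := hasSum_geometric_of_lt_one (Real.exp_pos (-x)).le (by simpa using hx0)
    have h2 := (h.mul_left ((2 * Real.cosh (a * x) - 2) / x * rexp (-x)))
    convert! h2 using 1
    · funext m
      rw [← Real.exp_nat_mul, mul_assoc, ← Real.exp_add]
      ring_nf
    · have h3 : rexp x - 1 ≠ 0 := by
        have := Real.add_one_lt_exp hx0.ne'
        linarith
      have h4 : 1 - (rexp x)⁻¹ = (rexp x - 1) / rexp x := by
        field_simp
      rw [Real.exp_neg, h4]
      field_simp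
  · intro m
    refine integral_cosh_mul_exp a _ ha ?_
    have : (0 : ℝ) ≤ m := by positivity
    linarith
  · intro m
    have h0 : 0 < a ^ 2 / ((m : ℝ) + 1) ^ 2 := by positivity
    have hq : a ^ 2 / ((m : ℝ) + 1) ^ 2 < 1 := by
      rw [div_lt_one (by positivity)]
      refine pow_lt_pow_left₀ ?_ ha.le (by norm_num)
      have : (0 : ℝ) ≤ m := by positivity
      linarith
    exact neg_pos.2 (Real.log_neg (sub_pos.2 hq) (by linarith))

/-- Hyperbolic Dirichlet kernel. -/
lemma dirichlet_sinh (N : ℕ) (y : ℝ) :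
    Real.sinh ((2 * N + 1) * y) = Real.sinh y *
      (2 * N + 1 + ∑ i ∈ Finset.range N, (2 * Real.cosh (2 * (i + 1) * y) - 2)) := by
  induction N with
  | zero => simp
  | succ N ih =>
    have h : Real.sinh ((2 * (N + 1 : ℕ) + 1) * y) =
        Real.sinh ((2 * N + 1) * y) + 2 * Real.cosh (2 * (N + 1) * y) * Real.sinh y := by
      rw [show (2 * ((N + 1 : ℕ) : ℝ) + 1) * y = 2 * (N + 1) * y + y by push_cast; ring,
        show (2 * (N : ℝ) + 1) * y = 2 * (N + 1) * y - y by ring, Real.sinh_add, Real.sinh_sub]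
      ring
    rw [h, ih, Finset.sum_range_succ]
    push_cast
    ring

/-- Hyperbolic Fejér kernel, obtained by summing `dirichlet_sinh`. -/
lemma fejer_sinh (N : ℕ) (y : ℝ) :
    Real.sinh ((N + 1) * y) ^ 2 = Real.sinh y ^ 2 *
      ((N + 1) ^ 2 + ∑ i ∈ Finset.range N,
        ((N : ℝ) - i) * (2 * Real.cosh (2 * (i + 1) * y) - 2)) := by
  induction N with
  | zero => simp
  | succ N ih =>
    have h : Real.sinh (((N + 1 : ℕ) + 1) * y) ^ 2 = Real.sinh ((N + 1) * y) ^ 2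
        + Real.sinh y * Real.sinh ((2 * (N + 1 : ℕ) + 1) * y) := by
      push_cast
      rw [show ((N : ℝ) + 1 + 1) * y = (N + 1) * y + y by ring,
        show (2 * ((N : ℝ) + 1) + 1) * y = (N + 1) * y + ((N + 1) * y + y) by ring,
        Real.sinh_add _ ((N + 1) * y + y), Real.sinh_add _ y, Real.cosh_add _ y]
      have h1 := Real.cosh_sq ((N + 1) * y)
      have h2 := Real.cosh_sq y
      ring_nf at h1 h2 ⊢
      rw [h1, h2]
      ring
    have hs : ∑ i ∈ Finset.range (N + 1),
          (((N + 1 : ℕ) : ℝ) - i) * (2 * Real.cosh (2 * (i + 1) * y) - 2)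
        = ∑ i ∈ Finset.range N, ((N : ℝ) - i) * (2 * Real.cosh (2 * (i + 1) * y) - 2)
          + ∑ i ∈ Finset.range (N + 1), (2 * Real.cosh (2 * (i + 1) * y) - 2) := by
      rw [Finset.sum_range_succ, Finset.sum_range_succ _ N, ← add_assoc, ← Finset.sum_add_distrib]
      push_cast
      congr 1
      · exact Finset.sum_congr rfl fun i _ => by ring
      · ring
    rw [h, ih, dirichlet_sinh, hs]
    push_cast
    ring

lemma log_superfactorial (N : ℕ) :
    Real.log (∏ k ∈ Finset.Icc 1 N, (Nat.factorial k : ℝ))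
      = ∑ i ∈ Finset.range N, ((N : ℝ) - i) * Real.log (i + 1) := by
  induction N with
  | zero => simp
  | succ N ih =>
    have hf : Real.log ((N + 1).factorial : ℝ) = ∑ i ∈ Finset.range (N + 1), Real.log (i + 1) := by
      rw [← Finset.prod_range_add_one_eq_factorial, Nat.cast_prod, Real.log_prod]
      · simp
      · intro i _
        positivity
    rw [Finset.prod_Icc_succ_top (by omega), Real.log_mul _ (by positivity), ih, hf,
      Finset.sum_range_succ, Finset.sum_range_succ _ N, ← add_assoc, ← Finset.sum_add_distrib]
    · push_cast
      congr 1
      · exact Finset.sum_congr rfl fun i _ => by ring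
      · ring
    · exact Finset.prod_ne_zero_iff.2 fun k _ => by positivity

lemma sin_pi_mul_pos (N i : ℕ) (hi : i < N) :
    0 < Real.sin (π * ((i + 1) / (N + 1))) := by
  have : (i : ℝ) < N := by exact_mod_cast hi
  have h : ((i : ℝ) + 1) / (N + 1) < 1 := by
    rw [div_lt_one (by positivity)]
    linarith
  exact Real.sin_pos_of_pos_of_lt_pi (by positivity) (by nlinarith [Real.pi_pos])

/-- Logarithmic form of `∏_{0 < k < n} 2 sin (π k / n) = n`: the factors are the moduli of
`1 - ζ ^ k` for the primitive root of unity `ζ = exp (2 π i / n)`. -/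
lemma sum_log_sin (N : ℕ) :
    ∑ i ∈ Finset.range N, Real.log (Real.sin (π * ((i + 1) / (N + 1))))
      = Real.log (N + 1) - N * Real.log 2 := by
  have h := (Complex.isPrimitiveRoot_exp (N + 1) (by omega)).prod_one_sub_pow_eq_order
  have h2 := congrArg (fun z : ℂ => ‖z‖) h
  simp only [norm_prod] at h2
  have h3 : ∀ i ∈ Finset.range N,
      ‖1 - Complex.exp (2 * π * Complex.I / ((N + 1 : ℕ) : ℂ)) ^ (i + 1)‖
        = 2 * Real.sin (π * ((i + 1) / (N + 1))) := by
    intro i hi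
    have hp := sin_pi_mul_pos N i (Finset.mem_range.1 hi)
    rw [norm_sub_rev, ← Complex.exp_nat_mul]
    have he : ((i + 1 : ℕ) : ℂ) * (2 * π * Complex.I / ((N + 1 : ℕ) : ℂ))
        = Complex.I * ((2 * (π * ((i + 1) / (N + 1))) : ℝ) : ℂ) := by
      push_cast
      ring
    rw [he, Complex.norm_exp_I_mul_ofReal_sub_one, mul_div_cancel_left₀ _ two_ne_zero]
    exact Real.norm_of_nonneg (by positivity)
  rw [Finset.prod_congr rfl h3] at h2
  have h4 : ‖((N : ℂ) + 1)‖ = (N : ℝ) + 1 := by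
    rw [← Nat.cast_add_one, Complex.norm_natCast]
    push_cast
    rfl
  rw [h4] at h2
  have h5 := congrArg Real.log h2
  rw [Real.log_prod fun i hi =>
    (mul_pos two_pos (sin_pi_mul_pos N i (Finset.mem_range.1 hi))).ne'] at h5
  rw [Finset.sum_congr rfl fun i hi =>
    Real.log_mul two_ne_zero (sin_pi_mul_pos N i (Finset.mem_range.1 hi)).ne',
    Finset.sum_add_distrib] at h5
  simp only [Finset.sum_const, Finset.card_range, nsmul_eq_mul] at h5
  linarith

lemma sum_weight_mul_of_symm (N : ℕ) (s : ℕ → ℝ) (hs : ∀ i < N, s (N - 1 - i) = s i) :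
    ∑ i ∈ Finset.range N, ((N : ℝ) - i) * s i = (N + 1) / 2 * ∑ i ∈ Finset.range N, s i := by
  have h : ∑ i ∈ Finset.range N, ((N : ℝ) - i) * s i
      = ∑ i ∈ Finset.range N, ((i : ℝ) + 1) * s i := by
    rw [← Finset.sum_range_reflect]
    refine Finset.sum_congr rfl fun i hi => ?_
    have hi := Finset.mem_range.1 hi
    rw [hs i hi, Nat.sub_sub, Nat.cast_sub (by omega)]
    push_cast
    ring
  have h2 : ∑ i ∈ Finset.range N, ((N : ℝ) - i) * s i + ∑ i ∈ Finset.range N, ((i : ℝ) + 1) * s i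
      = (N + 1) * ∑ i ∈ Finset.range N, s i := by
    rw [← Finset.sum_add_distrib, Finset.mul_sum]
    exact Finset.sum_congr rfl fun i _ => by ring
  linarith

lemma sum_weight_mul_log (N : ℕ) :
    ∑ i ∈ Finset.range N, ((N : ℝ) - i) *
        Real.log (π * ((i + 1) / (N + 1)) / Real.sin (π * ((i + 1) / (N + 1))))
      = Real.log (∏ k ∈ Finset.Icc 1 N, (Nat.factorial k : ℝ))
        - ((N : ℝ) + 1) ^ 2 / 2 * Real.log (N + 1)
        + ((((N : ℝ) + 1) ^ 2 - (N + 1)) / 2) * Real.log (2 * π) := by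
  have hterm : ∀ i ∈ Finset.range N, ((N : ℝ) - i) *
        Real.log (π * ((i + 1) / (N + 1)) / Real.sin (π * ((i + 1) / (N + 1))))
      = ((N : ℝ) - i) * Real.log (i + 1) + ((N : ℝ) - i) * (Real.log π - Real.log (N + 1))
        - ((N : ℝ) - i) * Real.log (Real.sin (π * ((i + 1) / (N + 1)))) := by
    intro i hi
    have hp := sin_pi_mul_pos N i (Finset.mem_range.1 hi)
    rw [Real.log_div (by positivity) hp.ne', Real.log_mul (by positivity) (by positivity),
      Real.log_div (by positivity) (by positivity)]
    ring
  rw [Finset.sum_congr rfl hterm, Finset.sum_sub_distrib, Finset.sum_add_distrib,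
    ← log_superfactorial, sum_weight_mul_of_symm N (fun _ => Real.log π - Real.log (N + 1))
      (fun _ _ => rfl),
    sum_weight_mul_of_symm N (fun i => Real.log (Real.sin (π * ((i + 1) / (N + 1))))),
    sum_log_sin, Real.log_mul two_ne_zero Real.pi_ne_zero]
  · simp only [Finset.sum_const, Finset.card_range, nsmul_eq_mul]
    ring
  · intro i hi
    have h : π * ((((N - 1 - i : ℕ) : ℝ) + 1) / (N + 1)) = π - π * ((i + 1) / (N + 1)) := by
      rw [Nat.sub_sub, Nat.cast_sub (by omega)]
      push_cast
      field_simp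
      ring
    simp only [h, Real.sin_pi_sub]

/-- For every integer `n ≥ 2`,
`∫₀^∞ ((cosh x - 1)/(2 sinh²(x/(2n))) - n²)/(x(eˣ-1)) dx
  = ln(∏_{k=1}^{n-1} k!) - (n²/2)·ln n + ((n²-n)/2)·ln(2π)`. -/
theorem universal_integral_su_n_eq_superfactorial (n : ℕ) (hn : 2 ≤ n) :
    (∫ x in Ioi (0 : ℝ),
        ((Real.cosh x - 1) / (2 * Real.sinh (x / (2 * n)) ^ 2) - (n : ℝ) ^ 2) /
          (x * (Real.exp x - 1))) =
      Real.log (∏ k ∈ Finset.Icc 1 (n - 1), (Nat.factorial k : ℝ)) -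
        (n : ℝ) ^ 2 / 2 * Real.log n +
        (((n : ℝ) ^ 2 - n) / 2) * Real.log (2 * π) := by
  obtain ⟨N, rfl⟩ : ∃ N, n = N + 1 := ⟨n - 1, by omega⟩
  have ha : ∀ i ∈ Finset.range N,
      0 < ((i : ℝ) + 1) / (N + 1) ∧ ((i : ℝ) + 1) / (N + 1) < 1 := by
    intro i hi
    have : (i : ℝ) < N := by exact_mod_cast Finset.mem_range.1 hi
    refine ⟨by positivity, ?_⟩
    rw [div_lt_one (by positivity)]
    linarith
  have hJ : ∀ i ∈ Finset.range N,
      ∫ x in Ioi (0 : ℝ), (2 * Real.cosh (((i : ℝ) + 1) / (N + 1) * x) - 2) / (x * (rexp x - 1))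
        = Real.log (π * ((i + 1) / (N + 1)) / Real.sin (π * ((i + 1) / (N + 1)))) :=
    fun i hi => integral_cosh_sub_two _ (ha i hi).1 (ha i hi).2
  -- The value `log (π a / sin (π a))` is positive; a nonzero Bochner integral forces integrability.
  have hint : ∀ i ∈ Finset.range N,
      Integrable (fun x => (2 * Real.cosh (((i : ℝ) + 1) / (N + 1) * x) - 2) / (x * (rexp x - 1)))
        (volume.restrict (Ioi (0 : ℝ))) := by
    intro i hi
    refine Integrable.of_integral_ne_zero ?_
    rw [hJ i hi]
    have hp := sin_pi_mul_pos N i (Finset.mem_range.1 hi)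
    refine (Real.log_pos ?_).ne'
    rw [one_lt_div hp]
    exact Real.sin_lt (by have := (ha i hi).1; positivity)
  have key : ∀ x ∈ Ioi (0 : ℝ),
      ((Real.cosh x - 1) / (2 * Real.sinh (x / (2 * (N + 1 : ℕ))) ^ 2) - ((N + 1 : ℕ) : ℝ) ^ 2) /
          (x * (Real.exp x - 1))
      = ∑ i ∈ Finset.range N, ((N : ℝ) - i) *
          ((2 * Real.cosh (((i : ℝ) + 1) / (N + 1) * x) - 2) / (x * (rexp x - 1))) := by
    intro x hx
    have hx0 : 0 < x := hx
    have hc : Real.cosh x - 1 = 2 * Real.sinh (x / 2) ^ 2 := by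
      have h1 := Real.cosh_two_mul (x / 2)
      have h2 := Real.cosh_sq (x / 2)
      rw [mul_div_cancel₀ x two_ne_zero] at h1
      linarith
    have hf := fejer_sinh N (x / (2 * (N + 1)))
    rw [show ((N : ℝ) + 1) * (x / (2 * (N + 1))) = x / 2 by field_simp] at hf
    have hs : Real.sinh (x / (2 * (N + 1))) ≠ 0 := (Real.sinh_pos_iff.2 (by positivity)).ne'
    push_cast
    rw [hc, hf, mul_div_mul_left _ _ two_ne_zero, mul_div_cancel_left₀ _ (pow_ne_zero 2 hs),
      add_sub_cancel_left, Finset.sum_div]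
    refine Finset.sum_congr rfl fun i _ => ?_
    rw [show 2 * ((i : ℝ) + 1) * (x / (2 * (N + 1))) = (i + 1) / (N + 1) * x by field_simp,
      mul_div_assoc]
  rw [setIntegral_congr_fun measurableSet_Ioi key,
    integral_finsetSum _ fun i hi => (hint i hi).const_mul _]
  simp only [integral_const_mul]
  rw [Finset.sum_congr rfl fun i hi => by rw [hJ i hi], sum_weight_mul_log]
  simp
end

section
/- For every integer n ≥ 2 and every real x ≠ 0, the key relation for the root system A_{n-1} holds: ∑_{1≤i<j≤n} (2·cosh((j-i)x/n) - 2) = (cosh x - 1)/(2 sinh²(x/(2n))) - n². -/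
open Real

/-!
Put `h = x / (2 n)`, so that `(j - i) x / n = 2 (j - i) h`. The double sum over `i < j ≤ m`, plus
`m ^ 2`, is the sum of `exp (2 (j - i) h)` over all pairs `i, j ≤ m`, that is
`(sinh (m h) / sinh h) ^ 2`. This is proved, with the denominator cleared and
`2 sinh (m h) ^ 2 = cosh (2 m h) - 1`, by induction on `m`: each new column `j = m + 1` is a
telescoping sum (`sinh_mul_sum_cosh`), by `2 sinh h cosh b = sinh (b + h) - sinh (b - h)`.
-/

/-- Telescoping sum of hyperbolic cosines along an arithmetic progression of step `2 h`; the offset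
`a` is free so that the induction on `m` goes through. -/
lemma sinh_mul_sum_cosh (h a : ℝ) (m : ℕ) :
    Real.sinh h * ∑ i ∈ Finset.Icc 1 m, 2 * Real.cosh (2 * (a - i) * h) =
      Real.sinh ((2 * a - 1) * h) - Real.sinh ((2 * a - 2 * m - 1) * h) := by
  induction m with
  | zero => simp
  | succ m ih =>
    rw [Finset.sum_Icc_succ_top (by omega), mul_add, ih]
    have e1 : (2 * a - 2 * (m : ℝ) - 1) * h = 2 * (a - ((m + 1 : ℕ) : ℝ)) * h + h := by
      push_cast; ring
    have e2 : (2 * a - 2 * ((m + 1 : ℕ) : ℝ) - 1) * h = 2 * (a - ((m + 1 : ℕ) : ℝ)) * h - h := by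
      ring
    rw [e1, e2, Real.sinh_add, Real.sinh_sub]
    ring

/-- The key relation with denominators cleared; decoupling the size `m` of the root system from the
step `h` is what allows induction. -/
lemma sinh_sq_mul_sum_cosh (h : ℝ) (m : ℕ) :
    2 * Real.sinh h ^ 2 * ((∑ i ∈ Finset.Icc 1 m, ∑ j ∈ Finset.Ioc i m,
        (2 * Real.cosh (2 * ((j : ℝ) - i) * h) - 2)) + (m : ℝ) ^ 2) =
      Real.cosh (2 * m * h) - 1 := by
  induction m with
  | zero => simp
  | succ m ih =>
    have split : (∑ i ∈ Finset.Icc 1 (m + 1), ∑ j ∈ Finset.Ioc i (m + 1),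
          (2 * Real.cosh (2 * ((j : ℝ) - i) * h) - 2)) =
        (∑ i ∈ Finset.Icc 1 m, ∑ j ∈ Finset.Ioc i m,
          (2 * Real.cosh (2 * ((j : ℝ) - i) * h) - 2)) +
        ((∑ i ∈ Finset.Icc 1 m, 2 * Real.cosh (2 * (((m : ℝ) + 1) - i) * h)) - 2 * m) := by
      rw [Finset.sum_Icc_succ_top (by omega), Finset.Ioc_self, Finset.sum_empty, add_zero]
      have col : ∀ i ∈ Finset.Icc 1 m, ∑ j ∈ Finset.Ioc i (m + 1),
            (2 * Real.cosh (2 * ((j : ℝ) - i) * h) - 2) =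
          (∑ j ∈ Finset.Ioc i m, (2 * Real.cosh (2 * ((j : ℝ) - i) * h) - 2)) +
          (2 * Real.cosh (2 * (((m : ℝ) + 1) - i) * h) - 2) := by
        intro i hi
        rw [Finset.sum_Ioc_succ_top (Finset.mem_Icc.mp hi).2]
        push_cast
        rfl
      rw [Finset.sum_congr rfl col, Finset.sum_add_distrib, Finset.sum_sub_distrib]
      simp [mul_comm]
    have tel := sinh_mul_sum_cosh h ((m : ℝ) + 1) m
    have e1 : (2 * ((m : ℝ) + 1) - 1) * h = (2 * m + 1) * h := by ring
    have e2 : (2 * ((m : ℝ) + 1) - 2 * m - 1) * h = h := by ring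
    rw [e1, e2] at tel
    have prod : Real.cosh (2 * ((m + 1 : ℕ) : ℝ) * h) - Real.cosh (2 * m * h) =
        2 * Real.sinh h * Real.sinh ((2 * m + 1) * h) := by
      have f1 : 2 * ((m + 1 : ℕ) : ℝ) * h = (2 * m + 1) * h + h := by push_cast; ring
      have f2 : 2 * (m : ℝ) * h = (2 * m + 1) * h - h := by ring
      rw [f1, f2, Real.cosh_add, Real.cosh_sub]
      ring
    rw [split]
    push_cast at prod ⊢
    linear_combination ih + 2 * Real.sinh h * tel - prod

/-- For every integer `n ≥ 2` and every real `x ≠ 0`, the key relation for the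
root system `A_{n-1}` holds:
`∑_{1≤i<j≤n} (2·cosh((j-i)x/n) - 2) = (cosh x - 1)/(2 sinh²(x/(2n))) - n²`. -/
theorem key_relation_A (n : ℕ) (hn : 2 ≤ n) (x : ℝ) (hx : x ≠ 0) :
    (∑ i ∈ Finset.Icc 1 n, ∑ j ∈ Finset.Ioc i n,
        (2 * Real.cosh (((j : ℝ) - i) * x / n) - 2)) =
      (Real.cosh x - 1) / (2 * Real.sinh (x / (2 * n)) ^ 2) - (n : ℝ) ^ 2 := by
  have hn0 : (n : ℝ) ≠ 0 := by
    have : n ≠ 0 := by omega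
    exact_mod_cast this
  have hs : Real.sinh (x / (2 * n)) ≠ 0 := by
    rw [Ne, Real.sinh_eq_zero]
    positivity
  have key := sinh_sq_mul_sum_cosh (x / (2 * n)) n
  have arg : ∀ i j : ℕ, 2 * ((j : ℝ) - i) * (x / (2 * n)) = ((j : ℝ) - i) * x / n := by
    intro i j
    field_simp
  have top : 2 * (n : ℝ) * (x / (2 * n)) = x := by field_simp
  simp only [arg, top] at key
  rw [eq_sub_iff_add_eq, eq_div_iff (by positivity), ← key]
  ring
end

section
/- For every integer n ≥ 1 and every real x ≠ 0, the key relation for the root system C_n holds: ∑_{1≤i<j≤n} [2·cosh((j-i)x/(2(n+1))) - 2 + 2·cosh((2n+2-i-j)x/(2(n+1))) - 2] + ∑_{i=1}^n [2·cosh((n+1-i)x/(n+1)) - 2] = [sinh((n+2)x/(2(n+1)))/sinh(x/(2(n+1)))] · [sinh((2n+1)x/(4(n+1)))/sinh(x/(4(n+1)))] · [sinh(nx/(4(n+1)))/sinh((n+2)x/(4(n+1)))] - n(2n+1). -/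
/-!
Put `y = x / (4 (n + 1))` and index the rows from the end, `a = n + 1 - i`, `b = n + 1 - j`, so that
the arguments of `cosh` become `2 (a - b) y`, `2 (a + b) y` for `b < a`, and `4 a y`: they depend on
`n` only through `y`. With `y` free, the claim is an induction on the rank. Passing from rank `m` to
`m + 1` adds the row `a = m + 1`, whose sum is a Dirichlet-kernel telescoping
(`sinh_mul_sum_cosh`), and the step is then an identity between Laurent polynomials in
`exp y` and `exp (m y)` (`rank_step`). On the right-hand side, the factor
`sinh (2 (n + 2) y) / sinh ((n + 2) y)` is `2 cosh ((n + 2) y)`.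
-/

open Real

/-- The terms are `4 cosh (2 A y) cosh (2 (k + 1) y) - 4`; after multiplying by `sinh y` the
hyperbolic part telescopes. -/
lemma sinh_mul_sum_cosh_s5 (A y : ℝ) (m : ℕ) :
    Real.sinh y * ∑ k ∈ Finset.range m,
        (2 * Real.cosh (2 * (A - ((k : ℝ) + 1)) * y) - 2 +
          (2 * Real.cosh (2 * (A + ((k : ℝ) + 1)) * y) - 2)) =
      2 * Real.cosh (2 * A * y) * (Real.sinh ((2 * (m : ℝ) + 1) * y) - Real.sinh y)
        - 4 * m * Real.sinh y := by
  induction m with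
  | zero => simp
  | succ m ih =>
    rw [Finset.sum_range_succ, mul_add, ih]
    have e1 : 2 * (A - ((m : ℝ) + 1)) * y = 2 * A * y - 2 * (m + 1) * y := by ring
    have e2 : 2 * (A + ((m : ℝ) + 1)) * y = 2 * A * y + 2 * (m + 1) * y := by ring
    have e3 : (2 * (m : ℝ) + 1) * y = 2 * (m + 1) * y - y := by ring
    have e4 : (2 * ((m + 1 : ℕ) : ℝ) + 1) * y = 2 * (m + 1) * y + y := by push_cast; ring
    rw [e1, e2, e3, e4, Real.cosh_sub, Real.cosh_add, Real.sinh_sub, Real.sinh_add]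
    push_cast
    ring

/-- The increment, from rank `m` to rank `m + 1`, of
`2 cosh ((m + 2) y) sinh ((2 m + 1) y) sinh (m y)`, the numerator of the closed form. -/
lemma rank_step (m y : ℝ) :
    2 * Real.cosh ((m + 1 + 2) * y) * Real.sinh ((2 * (m + 1) + 1) * y) *
        Real.sinh ((m + 1) * y) =
      2 * Real.cosh ((m + 2) * y) * Real.sinh ((2 * m + 1) * y) * Real.sinh (m * y) +
      Real.sinh (2 * y) *
        (2 * Real.cosh (2 * (m + 1) * y) * (Real.sinh ((2 * m + 1) * y) - Real.sinh y) +
          Real.sinh y * (2 * Real.cosh (4 * (m + 1) * y) + 1)) := by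
  have e1 : (m + 1 + 2) * y = m * y + y + y + y := by ring
  have e2 : (2 * (m + 1) + 1) * y = m * y + m * y + y + y + y := by ring
  have e3 : (m + 1) * y = m * y + y := by ring
  have e4 : (m + 2) * y = m * y + y + y := by ring
  have e5 : (2 * m + 1) * y = m * y + m * y + y := by ring
  have e6 : 2 * y = y + y := by ring
  have e7 : 2 * (m + 1) * y = m * y + m * y + y + y := by ring
  have e8 : 4 * (m + 1) * y =
      m * y + m * y + m * y + m * y + y + y + y + y := by ring
  rw [e1, e2, e3, e4, e5, e6, e7, e8]
  simp only [Real.sinh_eq, Real.cosh_eq, Real.exp_neg, Real.exp_add]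
  have hE := Real.exp_ne_zero y
  have hM := Real.exp_ne_zero (m * y)
  generalize Real.exp y = E at *
  generalize Real.exp (m * y) = M at *
  field_simp
  ring

/-- The key relation with denominators cleared and `y` independent of the rank. -/
lemma key_relation_C_aux (n : ℕ) (y : ℝ) :
    Real.sinh (2 * y) * Real.sinh y *
      (∑ m ∈ Finset.range n, ((∑ k ∈ Finset.range m,
        (2 * Real.cosh (2 * (((m : ℝ) + 1) - ((k : ℝ) + 1)) * y) - 2 +
          (2 * Real.cosh (2 * (((m : ℝ) + 1) + ((k : ℝ) + 1)) * y) - 2))) +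
        (2 * Real.cosh (4 * ((m : ℝ) + 1) * y) - 2)) + (n : ℝ) * (2 * n + 1)) =
      2 * Real.cosh (((n : ℝ) + 2) * y) * Real.sinh ((2 * (n : ℝ) + 1) * y) *
        Real.sinh (n * y) := by
  induction n with
  | zero => simp
  | succ n ih =>
    rw [Finset.sum_range_succ]
    have h1 := sinh_mul_sum_cosh_s5 ((n : ℝ) + 1) y n
    have h2 := rank_step n y
    push_cast
    rw [h2, ← ih]
    linear_combination Real.sinh (2 * y) * h1

/-- For every integer `n ≥ 1` and every real `x ≠ 0`, the key relation for the
root system `C_n` holds: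
`∑_{1≤i<j≤n} [2cosh((j-i)x/(2(n+1))) - 2 + 2cosh((2n+2-i-j)x/(2(n+1))) - 2]
   + ∑_{i=1}^n [2cosh((n+1-i)x/(n+1)) - 2]
 = [sinh((n+2)x/(2(n+1)))/sinh(x/(2(n+1)))]·[sinh((2n+1)x/(4(n+1)))/sinh(x/(4(n+1)))]
    ·[sinh(nx/(4(n+1)))/sinh((n+2)x/(4(n+1)))] - n(2n+1)`. -/
theorem key_relation_C (n : ℕ) (hn : 1 ≤ n) (x : ℝ) (hx : x ≠ 0) :
    (∑ i ∈ Finset.Icc 1 n, ∑ j ∈ Finset.Ioc i n,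
        (2 * Real.cosh (((j : ℝ) - i) * x / (2 * ((n : ℝ) + 1))) - 2 +
          (2 * Real.cosh ((2 * (n : ℝ) + 2 - i - j) * x / (2 * ((n : ℝ) + 1))) - 2))) +
      (∑ i ∈ Finset.Icc 1 n,
        (2 * Real.cosh (((n : ℝ) + 1 - i) * x / ((n : ℝ) + 1)) - 2)) =
      Real.sinh (((n : ℝ) + 2) * x / (2 * ((n : ℝ) + 1))) /
          Real.sinh (x / (2 * ((n : ℝ) + 1))) *
        (Real.sinh ((2 * (n : ℝ) + 1) * x / (4 * ((n : ℝ) + 1))) /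
          Real.sinh (x / (4 * ((n : ℝ) + 1)))) *
        (Real.sinh ((n : ℝ) * x / (4 * ((n : ℝ) + 1))) /
          Real.sinh (((n : ℝ) + 2) * x / (4 * ((n : ℝ) + 1)))) -
      (n : ℝ) * (2 * (n : ℝ) + 1) := by
  have hc : (n : ℝ) + 1 ≠ 0 := by positivity
  obtain ⟨y, rfl⟩ : ∃ y, x = 4 * ((n : ℝ) + 1) * y := ⟨x / (4 * ((n : ℝ) + 1)), by field_simp⟩
  have hy : y ≠ 0 := right_ne_zero_of_mul hx
  have hs1 : Real.sinh y ≠ 0 := by simpa using hy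
  have hs2 : Real.sinh (2 * y) ≠ 0 := by simpa using hy
  have hs3 : Real.sinh (((n : ℝ) + 2) * y) ≠ 0 := by
    rw [Ne, Real.sinh_eq_zero]
    exact mul_ne_zero (by positivity) hy
  -- Reindex by `i = n - m`, `j = n - k`.
  have hL : (∑ i ∈ Finset.Icc 1 n, ∑ j ∈ Finset.Ioc i n,
        (2 * Real.cosh (((j : ℝ) - i) * (4 * ((n : ℝ) + 1) * y) / (2 * ((n : ℝ) + 1))) - 2 +
          (2 * Real.cosh ((2 * (n : ℝ) + 2 - i - j) * (4 * ((n : ℝ) + 1) * y) /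
            (2 * ((n : ℝ) + 1))) - 2))) +
      (∑ i ∈ Finset.Icc 1 n,
        (2 * Real.cosh (((n : ℝ) + 1 - i) * (4 * ((n : ℝ) + 1) * y) / ((n : ℝ) + 1)) - 2)) =
      ∑ m ∈ Finset.range n, ((∑ k ∈ Finset.range m,
        (2 * Real.cosh (2 * (((m : ℝ) + 1) - ((k : ℝ) + 1)) * y) - 2 +
          (2 * Real.cosh (2 * (((m : ℝ) + 1) + ((k : ℝ) + 1)) * y) - 2))) +
        (2 * Real.cosh (4 * ((m : ℝ) + 1) * y) - 2)) := by
    rw [← Finset.sum_add_distrib]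
    refine Finset.sum_nbij' (fun i => n - i) (fun m => n - m) ?_ ?_ ?_ ?_ ?_
    · intro i hi; simp only [Finset.mem_Icc, Finset.mem_range] at *; omega
    · intro i hi; simp only [Finset.mem_Icc, Finset.mem_range] at *; omega
    · intro i hi; simp only [Finset.mem_Icc] at *; omega
    · intro i hi; simp only [Finset.mem_range] at *; omega
    intro i hi
    rw [Finset.mem_Icc] at hi
    congr 1
    · refine Finset.sum_nbij' (fun j => n - j) (fun k => n - k) ?_ ?_ ?_ ?_ ?_
      · intro j hj; simp only [Finset.mem_Ioc, Finset.mem_range] at *; omega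
      · intro j hj; simp only [Finset.mem_Ioc, Finset.mem_range] at *; omega
      · intro j hj; simp only [Finset.mem_Ioc] at *; omega
      · intro j hj; simp only [Finset.mem_range] at *; omega
      intro j hj
      rw [Finset.mem_Ioc] at hj
      rw [Nat.cast_sub hi.2, Nat.cast_sub hj.2]
      congr 4 <;> (field_simp; ring_nf)
    · rw [Nat.cast_sub hi.2]
      congr 3
      field_simp
      ring
  have key := key_relation_C_aux n y
  rw [hL]
  have a1 : ((n : ℝ) + 2) * (4 * ((n : ℝ) + 1) * y) / (2 * ((n : ℝ) + 1)) =
      2 * (((n : ℝ) + 2) * y) := by field_simp; ring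
  have a2 : 4 * ((n : ℝ) + 1) * y / (2 * ((n : ℝ) + 1)) = 2 * y := by field_simp; ring
  have a3 : (2 * (n : ℝ) + 1) * (4 * ((n : ℝ) + 1) * y) / (4 * ((n : ℝ) + 1)) =
      (2 * (n : ℝ) + 1) * y := by field_simp
  have a4 : 4 * ((n : ℝ) + 1) * y / (4 * ((n : ℝ) + 1)) = y := by field_simp
  have a5 : (n : ℝ) * (4 * ((n : ℝ) + 1) * y) / (4 * ((n : ℝ) + 1)) = n * y := by field_simp
  have a6 : ((n : ℝ) + 2) * (4 * ((n : ℝ) + 1) * y) / (4 * ((n : ℝ) + 1)) =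
      ((n : ℝ) + 2) * y := by field_simp
  rw [a1, a2, a3, a4, a5, a6, Real.sinh_two_mul (((n : ℝ) + 2) * y), eq_sub_iff_add_eq,
    div_mul_div_comm, div_mul_div_comm, eq_div_iff (mul_ne_zero (mul_ne_zero hs2 hs1) hs3)]
  linear_combination Real.sinh (((n : ℝ) + 2) * y) * key
end

section
/- ∫₀^∞ (1/t - 1/(eᵗ - 1) - e^{-t}/2) · dt/t = (1/2)·ln(2π). -/
open Real Set

/-!
Write `f` for the integrand. For `t > 0` the geometric series gives
`f t = ∑ₖ e^{-kt} (1 - e^{-t}) f t`, a series of nonnegative terms. Multiplication by `1 - e^{-t}`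
removes the denominator `e^t - 1`, so each term is elementary (`binet_term_eq`): it is a derivative
minus multiples of Frullani integrands, and its integral is
`1 - k log ((k+1)/k) - (1/2) log ((k+2)/(k+1))` (`integral_binet_term`). The partial sums of these
numbers telescope to `n - n log n + log n! - (1/2) log (n+1)` (`sum_binet_term`), which tends to
`(1/2) log (2π)` by Stirling's formula. Sum and integral may be exchanged because the terms are
nonnegative and their integrals are summable.
-/

open Filter Topology MeasureTheory

/-- The Frullani integrand `(e^{-at} - e^{-(a+1)t}) / t`. -/
noncomputable def frullaniExp (a t : ℝ) : ℝ := t⁻¹ * (exp (-(a * t)) - exp (-((a + 1) * t)))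

lemma frullaniExp_eq (a t : ℝ) : frullaniExp a t = exp (-(a * t)) * ((1 - exp (-t)) / t) := by
  rw [frullaniExp, show -((a + 1) * t) = -(a * t) + -t by ring, exp_add]
  ring

lemma frullaniExp_nonneg {a t : ℝ} (ht : 0 < t) : 0 ≤ frullaniExp a t := by
  rw [frullaniExp_eq]
  have : exp (-t) ≤ 1 := exp_le_one_iff.2 (by linarith)
  have : 0 ≤ 1 - exp (-t) := by linarith
  positivity

lemma frullaniExp_le {a t : ℝ} (ht : 0 < t) : frullaniExp a t ≤ exp (-(a * t)) := by
  rw [frullaniExp_eq]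
  refine mul_le_of_le_one_right (exp_pos _).le ?_
  rw [div_le_one ht]
  linarith [add_one_le_exp (-t)]

lemma integrableOn_frullaniExp {a : ℝ} (ha : 0 < a) : IntegrableOn (frullaniExp a) (Ioi 0) := by
  have h : IntegrableOn (fun t : ℝ => exp (-(a * t))) (Ioi 0) := by
    simpa using integrableOn_exp_mul_Ioi (neg_lt_zero.2 ha) 0
  refine Integrable.mono' h ?_ ?_
  · unfold frullaniExp
    exact Measurable.aestronglyMeasurable (by fun_prop)
  · filter_upwards [ae_restrict_mem measurableSet_Ioi] with t ht
    rw [norm_of_nonneg (frullaniExp_nonneg ht)]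
    exact frullaniExp_le ht

lemma integral_frullaniExp {a : ℝ} (ha : 0 < a) :
    ∫ t in Ioi 0, frullaniExp a t = log ((a + 1) / a) := by
  have h := Frullani.integral_Ioi_eq (f := fun x : ℝ => exp (-x)) (a := a) (b := a + 1)
    (L := 1) (R := 0)
    ((Continuous.continuousOn (by fun_prop)).locallyIntegrableOn measurableSet_Ioi)
    ha (by linarith)
    (by
      have : Continuous fun x : ℝ => exp (-x) := by fun_prop
      simpa using (this.tendsto 0).mono_left nhdsWithin_le_nhds)
    tendsto_exp_neg_atTop_nhds_zero
    (integrableOn_frullaniExp ha)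
  simpa [frullaniExp] using h

/-- The derivative of `t ↦ -frullaniExp a t`. -/
noncomputable def frullaniDeriv (a t : ℝ) : ℝ :=
  exp (-(a * t)) * (1 - exp (-t) - t * exp (-t)) / t ^ 2 + a * frullaniExp a t

lemma frullaniDeriv_nonneg {a t : ℝ} (ha : 0 ≤ a) (ht : 0 < t) : 0 ≤ frullaniDeriv a t := by
  have h : 0 ≤ 1 - exp (-t) - t * exp (-t) := by
    have h1 : exp t * exp (-t) = 1 := by rw [← exp_add]; simp
    nlinarith [add_one_le_exp t, exp_pos (-t)]
  have := frullaniExp_nonneg (a := a) ht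
  unfold frullaniDeriv
  positivity

lemma hasDerivAt_neg_frullaniExp {a t : ℝ} (ht : 0 < t) :
    HasDerivAt (fun t => -frullaniExp a t) (frullaniDeriv a t) t := by
  have h1 (c : ℝ) : HasDerivAt (fun t : ℝ => exp (-(c * t))) (exp (-(c * t)) * -c) t := by
    simpa using (((hasDerivAt_id t).const_mul c).neg).exp
  have h := (((hasDerivAt_inv ht.ne').mul ((h1 a).sub (h1 (a + 1))))).neg
  refine h.congr_deriv ?_
  rw [frullaniDeriv, frullaniExp_eq, show -((a + 1) * t) = -(a * t) + -t by ring, exp_add]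
  simp only [Pi.sub_apply]
  rw [show -((a + 1) * t) = -(a * t) + -t by ring, exp_add]
  field_simp
  ring

lemma tendsto_frullaniExp_zero (a : ℝ) : Tendsto (frullaniExp a) (𝓝[>] 0) (𝓝 1) := by
  have h1 (c : ℝ) : HasDerivAt (fun t : ℝ => exp (-(c * t))) (-c) 0 := by
    simpa using (((hasDerivAt_id (0 : ℝ)).const_mul c).neg).exp
  have h := ((h1 a).sub (h1 (a + 1))).tendsto_slope_zero_right
  simpa using h.congr fun t => show _ = frullaniExp a t by simp [frullaniExp]

lemma tendsto_frullaniExp_atTop {a : ℝ} (ha : 0 ≤ a) : Tendsto (frullaniExp a) atTop (𝓝 0) := by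
  refine tendsto_of_tendsto_of_tendsto_of_le_of_le' tendsto_const_nhds tendsto_inv_atTop_zero ?_ ?_
  · filter_upwards [eventually_gt_atTop 0] with t ht using frullaniExp_nonneg ht
  · filter_upwards [eventually_gt_atTop 0] with t ht
    have h1 : exp (-(a * t)) ≤ 1 := exp_le_one_iff.2 (by nlinarith)
    have h2 := exp_pos (-((a + 1) * t))
    exact mul_le_of_le_one_right (by positivity) (by linarith)

lemma integral_frullaniDeriv {a : ℝ} (ha : 0 ≤ a) :
    IntegrableOn (frullaniDeriv a) (Ioi 0) ∧ ∫ t in Ioi 0, frullaniDeriv a t = 1 := by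
  -- The value at `0`, where division by zero returns `0`, is replaced by the limit `-1`.
  let g : ℝ → ℝ := Function.update (fun t => -frullaniExp a t) 0 (-1)
  have h0 : ContinuousWithinAt g (Ici 0) 0 := by
    rw [continuousWithinAt_update_same]
    simpa using (tendsto_frullaniExp_zero a).neg
  have hd : ∀ t ∈ Ioi (0 : ℝ), HasDerivAt g (frullaniDeriv a t) t := by
    intro t ht
    refine (hasDerivAt_neg_frullaniExp ht).congr_of_eventuallyEq ?_
    filter_upwards [lt_mem_nhds ht] with s hs
    exact Function.update_of_ne hs.ne' _ _
  have hl : Tendsto g atTop (𝓝 0) := by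
    have h := (tendsto_frullaniExp_atTop ha).neg
    rw [neg_zero] at h
    refine h.congr' ?_
    filter_upwards [eventually_gt_atTop 0] with s hs
    exact (Function.update_of_ne hs.ne' (-1) (fun t => -frullaniExp a t)).symm
  have hp : ∀ t ∈ Ioi (0 : ℝ), 0 ≤ frullaniDeriv a t := fun t ht => frullaniDeriv_nonneg ha ht
  refine ⟨integrableOn_Ioi_deriv_of_nonneg h0 hd hp hl, ?_⟩
  rw [integral_Ioi_of_hasDerivAt_of_nonneg h0 hd hp hl]
  simp [g]

/-- The integrand of the theorem. -/
noncomputable def binetFun (t : ℝ) : ℝ := (1 / t - 1 / (exp t - 1) - exp (-t) / 2) / t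

/-- The inequality rests on `e^t - 1 - t ≥ t² / 2 ≥ t (1 - e^{-t}) / 2`. -/
lemma binetFun_nonneg {t : ℝ} (ht : 0 < t) : 0 ≤ binetFun t := by
  have h1 : exp t * exp (-t) = 1 := by rw [← exp_add]; simp
  have h2 := quadratic_le_exp_of_nonneg ht.le
  have h3 := add_one_le_exp (-t)
  have h4 : 0 < exp t - 1 := by linarith [add_one_le_exp t]
  have h5 : 1 / t - 1 / (exp t - 1) - exp (-t) / 2 =
      (exp t - 1 - t - t * (1 - exp (-t)) / 2) / (t * (exp t - 1)) := by
    field_simp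
    linear_combination (-t) * h1
  refine div_nonneg ?_ ht.le
  rw [h5]
  refine div_nonneg ?_ (by positivity)
  nlinarith

/-- Since `(1 - e^{-t}) / (e^t - 1) = e^{-t}`, no exponential denominator survives. -/
lemma binet_term_eq (a : ℝ) {t : ℝ} (ht : 0 < t) :
    exp (-(a * t)) * (1 - exp (-t)) * binetFun t =
      frullaniDeriv a t - a * frullaniExp a t - 1 / 2 * frullaniExp (a + 1) t := by
  have h4 : 0 < exp t - 1 := by linarith [add_one_le_exp t]
  rw [frullaniDeriv, frullaniExp_eq (a + 1), show -((a + 1) * t) = -(a * t) + -t by ring, exp_add,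
    binetFun, exp_neg t]
  have := exp_pos t
  field_simp
  ring

/-- For `a = 0` the Frullani integral diverges, but its coefficient `a` vanishes. -/
lemma integral_mul_frullaniExp {a : ℝ} (ha : 0 ≤ a) :
    IntegrableOn (fun t => a * frullaniExp a t) (Ioi 0) ∧
      ∫ t in Ioi 0, a * frullaniExp a t = a * log ((a + 1) / a) := by
  rcases ha.eq_or_lt with rfl | ha
  · simp
  · exact ⟨(integrableOn_frullaniExp ha).const_mul a,
      by rw [integral_const_mul, integral_frullaniExp ha]⟩

lemma integrableOn_binet_term {a : ℝ} (ha : 0 ≤ a) :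
    IntegrableOn (fun t => exp (-(a * t)) * (1 - exp (-t)) * binetFun t) (Ioi 0) := by
  refine IntegrableOn.congr_fun ?_ (fun t ht => (binet_term_eq a ht).symm) measurableSet_Ioi
  exact ((integral_frullaniDeriv ha).1.sub (integral_mul_frullaniExp ha).1).sub
    ((integrableOn_frullaniExp (by linarith)).const_mul _)

lemma integral_binet_term {a : ℝ} (ha : 0 ≤ a) :
    ∫ t in Ioi 0, exp (-(a * t)) * (1 - exp (-t)) * binetFun t =
      1 - a * log ((a + 1) / a) - 1 / 2 * log ((a + 2) / (a + 1)) := by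
  have ha1 : 0 < a + 1 := by linarith
  have h1 := integral_frullaniDeriv ha
  have h2 := integral_mul_frullaniExp ha
  rw [setIntegral_congr_fun measurableSet_Ioi (fun t ht => binet_term_eq a ht),
    integral_sub (f := fun t => frullaniDeriv a t - a * frullaniExp a t) (h1.1.sub h2.1)
      ((integrableOn_frullaniExp ha1).const_mul _),
    integral_sub h1.1 h2.1, h1.2, h2.2, integral_const_mul, integral_frullaniExp ha1]
  ring_nf

lemma sum_binet_term (n : ℕ) :
    ∑ k ∈ Finset.range n, (1 - (k : ℝ) * log ((k + 1) / k) - 1 / 2 * log ((k + 2) / (k + 1))) =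
      n - n * log n + log (n.factorial : ℝ) - 1 / 2 * log (n + 1) := by
  induction n with
  | zero => simp
  | succ n ih =>
    rw [Finset.sum_range_succ, ih, Nat.factorial_succ]
    have h1 : (n : ℝ) + 1 ≠ 0 := by positivity
    have h2 : (n : ℝ) + 2 ≠ 0 := by positivity
    have h3 : (n.factorial : ℝ) ≠ 0 := by positivity
    have h4 : (n : ℝ) * log ((n + 1) / n) = n * (log (n + 1) - log n) := by
      rcases Nat.eq_zero_or_pos n with rfl | hn
      · simp
      · rw [log_div h1 (by positivity)]
    push_cast
    rw [h4, log_div h2 h1, log_mul h1 h3, show (n : ℝ) + 1 + 1 = n + 2 by ring]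
    ring

lemma tendsto_sum_binet_term :
    Tendsto (fun n : ℕ => (n : ℝ) - n * log n + log (n.factorial : ℝ) - 1 / 2 * log (n + 1))
      atTop (𝓝 (1 / 2 * log (2 * π))) := by
  have h1 : Tendsto (fun n : ℕ => log (Stirling.stirlingSeq n)) atTop (𝓝 (log √π)) :=
    Stirling.tendsto_stirlingSeq_sqrt_pi.log (by positivity)
  have h2 : Tendsto (fun n : ℕ => log (1 + 1 / (n : ℝ))) atTop (𝓝 0) := by
    have := (tendsto_const_nhds (x := (1 : ℝ))).add (tendsto_one_div_atTop_nhds_zero_nat (𝕜 := ℝ))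
    simpa using this.log (by norm_num)
  have h3 := (h1.add_const (1 / 2 * log 2)).sub (h2.const_mul (1 / 2))
  have h4 : log √π + 1 / 2 * log 2 - 1 / 2 * 0 = 1 / 2 * log (2 * π) := by
    rw [log_sqrt pi_pos.le, log_mul two_ne_zero pi_ne_zero]
    ring
  rw [h4] at h3
  refine h3.congr' ?_
  filter_upwards [eventually_gt_atTop 0] with n hn
  have hn' : (0 : ℝ) < n := by exact_mod_cast hn
  rw [Stirling.log_stirlingSeq_formula, log_mul two_ne_zero hn'.ne',
    log_div hn'.ne' (exp_pos 1).ne', log_exp,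
    show 1 + 1 / (n : ℝ) = (n + 1) / n by field_simp, log_div (by positivity) hn'.ne']
  ring

/-- `∫₀^∞ (1/t - 1/(eᵗ-1) - e^{-t}/2) · dt/t = (1/2)·ln(2π)`. -/
theorem integral_binet_constant :
    (∫ t in Ioi (0 : ℝ),
        (1 / t - 1 / (Real.exp t - 1) - Real.exp (-t) / 2) / t) =
      1 / 2 * Real.log (2 * π) := by
  let F : ℕ → ℝ → ℝ := fun k t => exp (-((k : ℝ) * t)) * (1 - exp (-t)) * binetFun t
  have hF_nonneg (k : ℕ) {t : ℝ} (ht : 0 < t) : 0 ≤ F k t := by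
    have h1 : 0 ≤ 1 - exp (-t) := by
      linarith [exp_le_one_iff.2 (show -t ≤ 0 by linarith)]
    have := binetFun_nonneg ht
    positivity
  have hF_sum : HasSum (fun k => ∫ t in Ioi 0, F k t) (1 / 2 * log (2 * π)) := by
    rw [hasSum_iff_tendsto_nat_of_nonneg
      (fun k => setIntegral_nonneg measurableSet_Ioi fun t ht => hF_nonneg k ht)]
    refine tendsto_sum_binet_term.congr fun n => ?_
    rw [← sum_binet_term]
    exact Finset.sum_congr rfl fun k _ => (integral_binet_term k.cast_nonneg).symm
  have hF_norm (k : ℕ) : ∫ t in Ioi 0, ‖F k t‖ = ∫ t in Ioi 0, F k t :=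
    setIntegral_congr_fun measurableSet_Ioi fun t ht => norm_of_nonneg (hF_nonneg k ht)
  have h := hasSum_integral_of_summable_integral_norm (μ := volume.restrict (Ioi 0)) (F := F)
    (fun k => integrableOn_binet_term k.cast_nonneg)
    (by simpa only [hF_norm] using hF_sum.summable)
  rw [← h.unique hF_sum]
  refine setIntegral_congr_fun measurableSet_Ioi fun t ht => ?_
  have hlt : exp (-t) < 1 := exp_lt_one_iff.2 (neg_lt_zero.2 ht)
  have hg := ((hasSum_geometric_of_lt_one (exp_pos (-t)).le hlt).mul_right
    (1 - exp (-t))).mul_right (binetFun t)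
  rw [inv_mul_cancel₀ (by linarith), one_mul] at hg
  have hF_eq : (fun k => F k t) = fun k => exp (-t) ^ k * (1 - exp (-t)) * binetFun t := by
    funext k
    simp only [F]
    rw [← exp_nat_mul, mul_neg]
  exact (hF_eq ▸ hg).tsum_eq.symm
end

section
/- For every real z > 0, ∫₀^∞ (z/y - z²/(e^{zy} - 1) - (z²/2)·e^{-y}) · dy/y = (z²/2)·ln(2π) - (z²/2)·ln z. -/
/-!
The substitution `t = zy` and Frullani's integral `∫₀^∞ (e^{-zy} - e^{-y}) dy/y = -log z` reduce the
claim to `∫₀^∞ h = log (2π) / 2` for `h(t) = (1/t - 1/(eᵗ - 1) - e⁻ᵗ/2)/t` (`binetKernel`).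

To evaluate `∫ h`, which converges absolutely since `h` is bounded near `0` and `O(1/t²)` at
infinity, multiply by the factor `1 - e^{-Nt}`. It makes `1/(eᵗ - 1)` the finite sum
`∑_{k=1}^N e^{-kt}`, and one integration by parts of `(1 - e^{-Nt})/t²` leaves only Frullani
integrands, so that (`integral_one_sub_exp_mul_binetKernel`)
`∫₀^∞ (1 - e^{-Nt}) h(t) dt = N + ∑_{k=1}^N log (k/N) - log (N+1) / 2`.
The right side is `N + log N! - N log N - log (N+1) / 2`, which tends to `log (2π) / 2` by Stirling's
formula, while the left side tends to `∫ h` by dominated convergence.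
-/

open Real Set

open MeasureTheory Filter Topology in
lemma integrableOn_frullani_exp {a b : ℝ} (ha : 0 < a) (hb : 0 < b) :
    IntegrableOn (fun t : ℝ ↦ (rexp (-(a * t)) - rexp (-(b * t))) / t) (Ioi 0) := by
  -- the tangent-line inequality `1 - s ≤ e^{-s}` bounds the difference, in both orders of `a`, `b`
  have key : ∀ p q t : ℝ, rexp (-(p * t)) - rexp (-(q * t)) ≤ (q - p) * t * rexp (-(p * t)) := by
    intro p q t
    have h1 := Real.add_one_le_exp (-((q - p) * t))
    have h2 : rexp (-(q * t)) = rexp (-(p * t)) * rexp (-((q - p) * t)) := by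
      rw [← Real.exp_add]; congr 1; ring
    nlinarith [Real.exp_pos (-(p * t))]
  have hint : ∀ c : ℝ, 0 < c → IntegrableOn (fun t : ℝ ↦ rexp (-(c * t))) (Ioi 0) := by
    intro c hc
    simpa [neg_mul] using integrableOn_exp_mul_Ioi (a := -c) (by linarith) 0
  refine Integrable.mono' (((hint a ha).add (hint b hb)).const_mul |b - a|)
    (Measurable.aestronglyMeasurable (by fun_prop)) ?_
  refine (ae_restrict_iff' measurableSet_Ioi).2 (ae_of_all _ fun t ht ↦ ?_)
  have ht : 0 < t := ht
  rw [Real.norm_eq_abs, abs_div, abs_of_pos ht, div_le_iff₀ ht]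
  have h1 := key a b t
  have h2 := key b a t
  have ea := mul_pos ht (Real.exp_pos (-(a * t)))
  have eb := mul_pos ht (Real.exp_pos (-(b * t)))
  have c1 := le_abs_self (b - a)
  have c2 := neg_abs_le (b - a)
  have c3 := abs_nonneg (b - a)
  simp only [Pi.add_apply]
  rw [abs_le]
  constructor <;> nlinarith [mul_nonneg c3 ea.le, mul_nonneg c3 eb.le]

open MeasureTheory Filter Topology in
lemma integral_frullani_exp {a b : ℝ} (ha : 0 < a) (hb : 0 < b) :
    ∫ t in Ioi (0 : ℝ), (rexp (-(a * t)) - rexp (-(b * t))) / t = Real.log (b / a) := by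
  have hc : Continuous fun t : ℝ ↦ rexp (-t) := by fun_prop
  have h := Frullani.integral_Ioi_eq (f := fun t : ℝ ↦ rexp (-t)) (L := 1) (R := 0)
    (hc.locallyIntegrable.locallyIntegrableOn _) ha hb
    (by simpa using (hc.tendsto 0).mono_left nhdsWithin_le_nhds) Real.tendsto_exp_neg_atTop_nhds_zero
    ((integrableOn_frullani_exp ha hb).congr_fun (fun t _ ↦ by
      simp only [smul_eq_mul]; ring) measurableSet_Ioi)
  simp only [smul_eq_mul, sub_zero, mul_one] at h
  rw [← h]
  congr 1
  ext t
  ring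

/-- The integrand of the integral `∫₀^∞ (1/t - 1/(eᵗ - 1) - e⁻ᵗ/2) dt/t = log (2π) / 2`. -/
noncomputable def binetKernel (t : ℝ) : ℝ := (1 / t - 1 / (rexp t - 1) - rexp (-t) / 2) / t

lemma abs_binetKernel_le_of_le_one {t : ℝ} (ht : 0 < t) (ht1 : t ≤ 1) : |binetKernel t| ≤ 2 := by
  have hr := Real.exp_bound (x := t) (by rw [abs_of_pos ht]; exact ht1) (n := 3) (by norm_num)
  rw [abs_of_pos ht] at hr
  simp only [Finset.sum_range_succ, Finset.sum_range_zero, Nat.factorial] at hr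
  norm_num at hr
  set r := rexp t - (1 + t + t ^ 2 / 2) with hrdef
  have hE : rexp t = 1 + t + t ^ 2 / 2 + r := by rw [hrdef]; ring
  have hE1 : t ≤ rexp t - 1 := by linarith [Real.add_one_le_exp t]
  have hpos : 0 < rexp t - 1 := by linarith
  have h1 : rexp (-t) ≤ 1 := Real.exp_le_one_iff.2 (by linarith)
  have h2 : 1 - t ≤ rexp (-t) := by linarith [Real.add_one_le_exp (-t)]
  -- the first summand is `(1/t - 1/(eᵗ - 1) - 1/2)/t`, whose numerator over the common denominator
  -- is `O(t³)` by the Taylor bound on `r`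
  have hsplit : binetKernel t = (2 * r - t ^ 3 / 2 - t * r) / (2 * t ^ 2 * (rexp t - 1))
      + (1 - rexp (-t)) / (2 * t) := by
    have : (2 * r - t ^ 3 / 2 - t * r) = 2 * (rexp t - 1) - 2 * t - t * (rexp t - 1) := by
      rw [hE]; ring
    rw [this, binetKernel]
    field_simp
    ring
  have ht3 : 0 < t ^ 3 := by positivity
  obtain ⟨hr1, hr2⟩ := abs_le.1 hr
  have hA : |(2 * r - t ^ 3 / 2 - t * r) / (2 * t ^ 2 * (rexp t - 1))| ≤ 3 / 2 := by
    rw [abs_div, abs_of_pos (by positivity : 0 < 2 * t ^ 2 * (rexp t - 1)),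
      div_le_iff₀ (by positivity), abs_le]
    have : t ^ 3 ≤ t ^ 2 * (rexp t - 1) := by nlinarith [sq_nonneg t]
    constructor <;> nlinarith
  have hB : |(1 - rexp (-t)) / (2 * t)| ≤ 1 / 2 := by
    rw [abs_div, abs_of_pos (by positivity : 0 < 2 * t), div_le_iff₀ (by positivity), abs_le]
    constructor <;> linarith
  rw [hsplit]
  refine (abs_add_le _ _).trans ?_
  linarith

lemma abs_binetKernel_le_of_pos {t : ℝ} (ht : 0 < t) : |binetKernel t| ≤ 3 * t ^ (-2 : ℝ) := by
  have hE1 : t ≤ rexp t - 1 := by linarith [Real.add_one_le_exp t]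
  have a1 : 0 < 1 / (rexp t - 1) := by apply one_div_pos.2; linarith
  have a2 : 1 / (rexp t - 1) ≤ 1 / t := one_div_le_one_div_of_le ht hE1
  have a3 : rexp (-t) ≤ 1 / t := by
    rw [Real.exp_neg, ← one_div]; exact one_div_le_one_div_of_le ht (by linarith)
  have a4 := Real.exp_pos (-t)
  have : (t : ℝ) ^ (-2 : ℝ) = 1 / t / t := by
    rw [Real.rpow_neg ht.le]; norm_num; field_simp
  rw [this, binetKernel, abs_div, abs_of_pos ht, div_le_iff₀ ht]
  have : 3 * (1 / t / t) * t = 3 * (1 / t) := by field_simp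
  rw [this, abs_le]
  constructor <;> linarith

open MeasureTheory in
lemma integrableOn_binetKernel : IntegrableOn binetKernel (Ioi 0) := by
  have hm : Measurable binetKernel := by unfold binetKernel; fun_prop
  rw [← Ioc_union_Ioi_eq_Ioi zero_le_one]
  refine IntegrableOn.union ?_ ?_
  · refine Integrable.mono' (integrableOn_const (C := (2 : ℝ)) (by simp)) hm.aestronglyMeasurable ?_
    exact (ae_restrict_iff' measurableSet_Ioc).2
      (ae_of_all _ fun t ht ↦ abs_binetKernel_le_of_le_one ht.1 ht.2)
  · refine Integrable.mono' ((integrableOn_Ioi_rpow_of_lt (a := -2) (by norm_num)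
      one_pos).const_mul 3) hm.aestronglyMeasurable ?_
    exact (ae_restrict_iff' measurableSet_Ioi).2
      (ae_of_all _ fun t ht ↦ abs_binetKernel_le_of_pos (one_pos.trans ht))

/-- For `t > 0` the truncating factor `1 - e^{-Nt}` turns `1/(eᵗ - 1)` into a finite geometric sum,
and `(1 - e^{-Nt})/t²` is a total derivative up to `N e^{-Nt}/t`. What is left over is a combination
of Frullani integrands. -/
lemma one_sub_exp_mul_binetKernel (N : ℕ) {t : ℝ} (ht : 0 < t) :
    (1 - rexp (-(N * t))) * binetKernel t =
      ((1 - rexp (-(N * t))) / t ^ 2 - N * rexp (-(N * t)) / t)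
      + (∑ k ∈ Finset.range N, (rexp (-(N * t)) - rexp (-((k + 1 : ℝ) * t))) / t
        - 1 / 2 * ((rexp (-(1 * t)) - rexp (-((N + 1 : ℝ) * t))) / t)) := by
  have hE : 0 < rexp t - 1 := by linarith [Real.add_one_le_exp t]
  have hpow : ∀ k : ℕ, rexp (-(k * t)) = rexp (-t) ^ k := by
    intro k; rw [← Real.exp_nat_mul]; congr 1; ring
  have hgeom : ∑ k ∈ Finset.range N, rexp (-((k + 1 : ℝ) * t)) =
      (1 - rexp (-(N * t))) / (rexp t - 1) := by
    have h := geom_sum_mul (rexp (-t)) N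
    rw [eq_div_iff hE.ne', Finset.sum_mul, hpow]
    have h2 : rexp (-t) * rexp t = 1 := by rw [← Real.exp_add]; simp
    calc _ = ∑ k ∈ Finset.range N, rexp (-t) ^ k * (1 - rexp (-t)) := by
          refine Finset.sum_congr rfl fun k _ ↦ ?_
          have := hpow (k + 1)
          push_cast at this
          rw [this, pow_succ]
          linear_combination rexp (-t) ^ k * h2
      _ = _ := by rw [← Finset.sum_mul]; linear_combination -h
  have hN1 : rexp (-((N + 1 : ℝ) * t)) = rexp (-(N * t)) * rexp (-t) := by
    rw [← Real.exp_add]; congr 1; ring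
  rw [← Finset.sum_div, Finset.sum_sub_distrib, hgeom, hN1, binetKernel]
  simp only [Finset.sum_const, Finset.card_range, nsmul_eq_mul, one_mul]
  field_simp
  ring

open MeasureTheory Filter Topology in
lemma integral_one_sub_exp_mul_binetKernel {N : ℕ} (hN : 0 < N) :
    ∫ t in Ioi (0 : ℝ), (1 - rexp (-(N * t))) * binetKernel t =
      N + (∑ k ∈ Finset.range N, Real.log ((k + 1 : ℝ) / N) - 1 / 2 * Real.log (N + 1)) := by
  have hN' : (0 : ℝ) < N := by exact_mod_cast hN
  have hk : ∀ k : ℕ, (0 : ℝ) < k + 1 := fun k ↦ by positivity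
  have hL : IntegrableOn (fun t ↦ (1 - rexp (-(N * t))) * binetKernel t) (Ioi 0) := by
    refine Integrable.mono integrableOn_binetKernel (Measurable.aestronglyMeasurable
      (by unfold binetKernel; fun_prop)) ?_
    refine (ae_restrict_iff' measurableSet_Ioi).2 (ae_of_all _ fun t ht ↦ ?_)
    have ht : 0 < t := ht
    have h1 : rexp (-(N * t)) ≤ 1 := Real.exp_le_one_iff.2 (by nlinarith)
    have h2 := Real.exp_pos (-(N * t))
    rw [norm_mul]
    refine mul_le_of_le_one_left (norm_nonneg _) ?_
    rw [Real.norm_eq_abs, abs_le]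
    constructor <;> linarith
  have hS : ∀ k ∈ Finset.range N, IntegrableOn
      (fun t : ℝ ↦ (rexp (-(N * t)) - rexp (-((k + 1 : ℝ) * t))) / t) (Ioi 0) :=
    fun k _ ↦ integrableOn_frullani_exp hN' (hk k)
  have hS' := integrable_finsetSum _ hS
  have hT := (integrableOn_frullani_exp one_pos (hk N)).const_mul (1 / 2)
  have hF : IntegrableOn (fun t : ℝ ↦
      ∑ k ∈ Finset.range N, (rexp (-(N * t)) - rexp (-((k + 1 : ℝ) * t))) / t
        - 1 / 2 * ((rexp (-(1 * t)) - rexp (-((N + 1 : ℝ) * t))) / t)) (Ioi 0) := hS'.sub hT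
  have hD : IntegrableOn (fun t : ℝ ↦ (1 - rexp (-(N * t))) / t ^ 2 - N * rexp (-(N * t)) / t)
      (Ioi 0) := by
    refine (hL.sub hF).congr_fun (fun t ht ↦ ?_) measurableSet_Ioi
    have := one_sub_exp_mul_binetKernel N (t := t) ht
    simp only [Pi.sub_apply] at this ⊢
    rw [this]; ring
  have hderiv : ∀ t : ℝ, HasDerivAt (fun t : ℝ ↦ rexp (-(N * t))) (-(N * rexp (-(N * t)))) t := by
    intro t
    have h : HasDerivAt (fun t : ℝ ↦ -(N * t)) (-(N * 1)) t :=
      ((hasDerivAt_id t).const_mul (N : ℝ)).neg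
    exact h.exp.congr_deriv (by ring)
  have hDval : ∫ t in Ioi (0 : ℝ), ((1 - rexp (-(N * t))) / t ^ 2 - N * rexp (-(N * t)) / t) = (N : ℝ) := by
    -- the primitive is `(e^{-Nt} - 1)/t`, extended by its limit `-N` at `0`
    have hcont : ContinuousWithinAt (dslope (fun t : ℝ ↦ rexp (-(N * t))) 0) (Ici 0) 0 :=
      (continuousAt_dslope_same.2 (hderiv 0).differentiableAt).continuousWithinAt
    have hval : ∀ t : ℝ, 0 < t → dslope (fun t : ℝ ↦ rexp (-(N * t))) 0 t =
        (rexp (-(N * t)) - 1) / t := by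
      intro t ht
      rw [dslope_of_ne _ ht.ne', slope_def_field]; simp
    have h := integral_Ioi_of_hasDerivAt_of_tendsto (m := 0) hcont (fun t ht ↦ ?_) hD ?_
    · rw [h, dslope_same, (hderiv 0).deriv]; simp
    · have ht : 0 < t := ht
      have := ((hderiv t).sub_const 1).div (hasDerivAt_id t) ht.ne'
      refine (this.congr_of_eventuallyEq ?_).congr_deriv ?_
      · filter_upwards [lt_mem_nhds ht] with s hs using hval s hs
      · simp only [id]; field_simp; ring
    · have h0 : Tendsto (fun t : ℝ ↦ rexp (-(N * t)) - 1) atTop (𝓝 (0 - 1)) :=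
        (Real.tendsto_exp_neg_atTop_nhds_zero.comp
          (tendsto_id.const_mul_atTop hN')).sub_const 1
      refine (h0.div_atTop tendsto_id).congr' ?_
      filter_upwards [eventually_gt_atTop 0] with t ht using (hval t ht).symm
  rw [setIntegral_congr_fun measurableSet_Ioi
    (fun t ht ↦ one_sub_exp_mul_binetKernel N (t := t) ht)]
  rw [integral_add hD hF, integral_sub hS' hT, integral_finsetSum _ hS, hDval,
    integral_const_mul, integral_frullani_exp one_pos (hk N), div_one]
  congr 2
  exact Finset.sum_congr rfl fun k _ ↦ integral_frullani_exp hN' (hk k)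

open MeasureTheory Filter Topology in
lemma integral_binetKernel : ∫ t in Ioi (0 : ℝ), binetKernel t = 1 / 2 * Real.log (2 * π) := by
  have hlim1 : Tendsto (fun n : ℕ ↦ ∫ t in Ioi (0 : ℝ),
      (1 - rexp (-((n + 1 : ℕ) * t))) * binetKernel t) atTop
      (𝓝 (∫ t in Ioi (0 : ℝ), binetKernel t)) := by
    refine tendsto_integral_of_dominated_convergence (fun t ↦ |binetKernel t|) (fun n ↦
      Measurable.aestronglyMeasurable (by unfold binetKernel; fun_prop))
      integrableOn_binetKernel.abs (fun n ↦ ?_) ?_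
    · refine (ae_restrict_iff' measurableSet_Ioi).2 (ae_of_all _ fun t ht ↦ ?_)
      have ht : 0 < t := ht
      have h1 : rexp (-((n + 1 : ℕ) * t)) ≤ 1 :=
        Real.exp_le_one_iff.2 (by have : 0 ≤ ((n + 1 : ℕ) : ℝ) * t := by positivity
                                  linarith)
      have h2 := Real.exp_pos (-((n + 1 : ℕ) * t))
      rw [norm_mul]
      refine mul_le_of_le_one_left (norm_nonneg _) ?_
      rw [Real.norm_eq_abs, abs_le]
      constructor <;> linarith
    · refine (ae_restrict_iff' measurableSet_Ioi).2 (ae_of_all _ fun t ht ↦ ?_)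
      have ht : 0 < t := ht
      have h0 : Tendsto (fun n : ℕ ↦ rexp (-((n + 1 : ℕ) * t))) atTop (𝓝 0) :=
        Real.tendsto_exp_neg_atTop_nhds_zero.comp
          ((tendsto_natCast_atTop_atTop.comp (tendsto_add_atTop_nat 1)).atTop_mul_const ht)
      simpa using (h0.const_sub 1).mul_const (binetKernel t)
  refine tendsto_nhds_unique hlim1 ?_
  have hst : Tendsto (fun n : ℕ ↦ Real.log (Stirling.stirlingSeq (n + 1))
      + 1 / 2 * Real.log (2 * ((n + 1 : ℕ) / ((n + 1 : ℕ) + 1 : ℝ)))) atTop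
      (𝓝 (Real.log √π + 1 / 2 * Real.log (2 * 1))) := by
    refine Tendsto.add ?_ (Tendsto.const_mul _ ?_)
    · exact (Stirling.tendsto_stirlingSeq_sqrt_pi.comp (tendsto_add_atTop_nat 1)).log
        (by positivity)
    · refine Tendsto.log (Tendsto.const_mul _ ?_) (by norm_num)
      exact (tendsto_natCast_div_add_atTop (1 : ℝ)).comp (tendsto_add_atTop_nat 1)
  have hval : Real.log √π + 1 / 2 * Real.log (2 * 1) = 1 / 2 * Real.log (2 * π) := by
    rw [Real.log_sqrt Real.pi_pos.le, Real.log_mul two_ne_zero Real.pi_ne_zero, mul_one]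
    ring
  rw [← hval]
  refine hst.congr fun n ↦ ?_
  rw [integral_one_sub_exp_mul_binetKernel (N := n + 1) n.succ_pos, Stirling.log_stirlingSeq_formula]
  have hn : (0 : ℝ) < (n + 1 : ℕ) := by positivity
  set m := n + 1
  have hfac : ∑ k ∈ Finset.range m, Real.log ((k + 1 : ℝ) / m) =
      Real.log (m.factorial : ℝ) - m * Real.log m := by
    rw [← Finset.prod_range_add_one_eq_factorial]
    push_cast
    rw [Real.log_prod (fun k _ ↦ by positivity)]
    have hlog : ∀ k ∈ Finset.range m, Real.log ((k + 1 : ℝ) / m) =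
        Real.log (k + 1 : ℝ) - Real.log m := fun k _ ↦ Real.log_div (by positivity) hn.ne'
    rw [Finset.sum_congr rfl hlog]
    simp [Finset.sum_sub_distrib]
  rw [hfac, Real.log_mul two_ne_zero hn.ne', Real.log_mul two_ne_zero (by positivity),
    Real.log_div hn.ne' (Real.exp_pos 1).ne',
    Real.log_div hn.ne' (by positivity : (m + 1 : ℝ) ≠ 0), Real.log_exp]
  ring

/-- For every real `z > 0`,
`∫₀^∞ (z/y - z²/(e^{zy}-1) - (z²/2)·e^{-y}) · dy/y = (z²/2)·ln(2π) - (z²/2)·ln z`. -/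
theorem integral_I2_eval (z : ℝ) (hz : 0 < z) :
    (∫ y in Ioi (0 : ℝ),
        (z / y - z ^ 2 / (Real.exp (z * y) - 1) - z ^ 2 / 2 * Real.exp (-y)) / y) =
      z ^ 2 / 2 * Real.log (2 * π) - z ^ 2 / 2 * Real.log z := by
  have hcomp := MeasureTheory.integral_comp_mul_left_Ioi binetKernel 0 hz
  have hint : MeasureTheory.IntegrableOn (fun y ↦ binetKernel (z * y)) (Ioi 0) := by
    rw [MeasureTheory.integrableOn_Ioi_comp_mul_left_iff _ _ hz, mul_zero]
    exact integrableOn_binetKernel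
  rw [mul_zero, integral_binetKernel, smul_eq_mul] at hcomp
  have hsplit : ∀ y ∈ Ioi (0 : ℝ),
      (z / y - z ^ 2 / (Real.exp (z * y) - 1) - z ^ 2 / 2 * Real.exp (-y)) / y =
      z ^ 3 * binetKernel (z * y)
        + z ^ 2 / 2 * ((rexp (-(z * y)) - rexp (-(1 * y))) / y) := by
    intro y hy
    have hy : 0 < y := hy
    have hE : 0 < rexp (z * y) - 1 := by
      linarith [Real.add_one_le_exp (z * y), mul_pos hz hy]
    rw [binetKernel, one_mul]
    field_simp
    ring
  rw [MeasureTheory.setIntegral_congr_fun measurableSet_Ioi hsplit,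
    MeasureTheory.integral_add (hint.const_mul _)
      ((integrableOn_frullani_exp hz one_pos).const_mul _),
    MeasureTheory.integral_const_mul, MeasureTheory.integral_const_mul, hcomp,
    integral_frullani_exp hz one_pos, one_div z, Real.log_inv]
  field_simp
  ring
end

section
/- Malmsten's integral representation: for every real z > 0, ln Γ(1+z) = ∫₀^∞ (e^{-zx} + z(1 - e^{-x}) - 1) / (x(eˣ - 1)) dx, where Γ is the Gamma function. -/
/-!
The proof goes through the Bohr–Mollerup theorem (`Real.eq_Gamma_of_log_convex`).
Let `J z` be the integral on the right. The integral converges absolutely for every `z > -1`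
(`integrableOn_malmstenIntegrand`): the numerator is `O(x²)` at `0`, and at infinity the integrand
is dominated by `e^{-(z+1)x}` and `e^{-x}`. So `y ↦ exp (J (y - 1))` is defined on `(0, ∞)`.
It takes the value `1` at `1`; it is log-convex because the integrand is convex in `z`; and it
satisfies the functional equation of `Γ` because
`J y - J (y - 1) = ∫₀^∞ (e^{-x} - e^{-yx}) / x dx = log y`, a Frullani integral.
-/

open Real Set
open MeasureTheory

/-- The integrand of Malmsten's formula, as a function of the parameter `z` and the variable `x`.
At `x = 0` it has the junk value `0`, which no integral over `(0, ∞)` sees. -/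
noncomputable def malmstenIntegrand (z x : ℝ) : ℝ :=
  (Real.exp (-z * x) + z * (1 - Real.exp (-x)) - 1) / (x * (Real.exp x - 1))

lemma mul_exp_sub_one_pos {x : ℝ} (hx : 0 < x) : 0 < x * (Real.exp x - 1) :=
  mul_pos hx (sub_pos.2 (Real.one_lt_exp_iff.2 hx))

lemma continuousOn_malmstenIntegrand (z : ℝ) : ContinuousOn (malmstenIntegrand z) (Ioi 0) := by
  unfold malmstenIntegrand
  exact ContinuousOn.div (by fun_prop) (by fun_prop) fun x hx => (mul_exp_sub_one_pos hx).ne'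

/-- The linear terms of the numerator cancel, so the integrand is bounded near `0`. -/
lemma abs_malmstenIntegrand_le_of_small {z x : ℝ} (hx : 0 < x) (hx1 : x ≤ 1)
    (hzx : |z| * x ≤ 1) : |malmstenIntegrand z x| ≤ z ^ 2 + |z| := by
  have h1 : |Real.exp (-z * x) - 1 - (-z * x)| ≤ (-z * x) ^ 2 :=
    Real.abs_exp_sub_one_sub_id_le (by rwa [abs_mul, abs_neg, abs_of_pos hx])
  have h2 : |Real.exp (-x) - 1 - (-x)| ≤ (-x) ^ 2 :=
    Real.abs_exp_sub_one_sub_id_le (by rwa [abs_neg, abs_of_pos hx])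
  have hD := mul_exp_sub_one_pos hx
  have hD2 : x ^ 2 ≤ x * (Real.exp x - 1) := by
    nlinarith [Real.add_one_le_exp x]
  have hN : |Real.exp (-z * x) + z * (1 - Real.exp (-x)) - 1| ≤ (z ^ 2 + |z|) * x ^ 2 := by
    calc |Real.exp (-z * x) + z * (1 - Real.exp (-x)) - 1|
        = |(Real.exp (-z * x) - 1 - (-z * x)) - z * (Real.exp (-x) - 1 - (-x))| := by
          congr 1; ring
      _ ≤ |Real.exp (-z * x) - 1 - (-z * x)| + |z * (Real.exp (-x) - 1 - (-x))| := abs_sub _ _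
      _ ≤ (-z * x) ^ 2 + |z| * (-x) ^ 2 := by rw [abs_mul]; gcongr
      _ = (z ^ 2 + |z|) * x ^ 2 := by ring
  rw [malmstenIntegrand, abs_div, abs_of_pos hD, div_le_iff₀ hD]
  exact hN.trans (by gcongr)

lemma abs_malmstenIntegrand_le_of_large {z x δ : ℝ} (hδ : 0 < δ) (hx : δ < x) :
    |malmstenIntegrand z x| ≤ (δ * (1 - Real.exp (-δ)))⁻¹ *
      (Real.exp (-(z + 1) * x) + (|z| + 1) * Real.exp (-x)) := by
  have hx0 : 0 < x := hδ.trans hx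
  have hc : 0 < 1 - Real.exp (-δ) := by simpa using hδ
  have hD := mul_exp_sub_one_pos hx0
  have hD2 : δ * (1 - Real.exp (-δ)) * Real.exp x ≤ x * (Real.exp x - 1) := by
    have h : Real.exp x - 1 = (1 - Real.exp (-x)) * Real.exp x := by
      rw [sub_mul, ← Real.exp_add]; simp
    rw [h, ← mul_assoc]
    gcongr
  have hN : |Real.exp (-z * x) + z * (1 - Real.exp (-x)) - 1| ≤
      Real.exp (-z * x) + (|z| + 1) := by
    have h0 : 0 < Real.exp (-x) := Real.exp_pos _
    have h1 : Real.exp (-x) < 1 := by simpa using hx0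
    have h2 : |z * (1 - Real.exp (-x))| ≤ |z| := by
      rw [abs_mul, abs_of_pos (sub_pos.2 h1)]
      exact mul_le_of_le_one_right (abs_nonneg z) (by linarith)
    have h3 := Real.exp_pos (-z * x)
    rw [abs_le] at h2 ⊢
    constructor <;> linarith
  rw [malmstenIntegrand, abs_div, abs_of_pos hD]
  calc _ ≤ (Real.exp (-z * x) + (|z| + 1)) / (δ * (1 - Real.exp (-δ)) * Real.exp x) := by
        gcongr
    _ = _ := by
        rw [show -(z + 1) * x = -z * x + -x by ring, Real.exp_add, Real.exp_neg x]
        field_simp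

lemma integrableOn_malmstenIntegrand {z : ℝ} (hz : -1 < z) :
    IntegrableOn (malmstenIntegrand z) (Ioi 0) := by
  -- `δ` is small enough that both `δ ≤ 1` and `|z| * δ ≤ 1`.
  obtain ⟨δ, hδ, hδ1, hzδ⟩ : ∃ δ : ℝ, 0 < δ ∧ δ ≤ 1 ∧ |z| * δ ≤ 1 := by
    have := abs_nonneg z
    refine ⟨(1 + |z|)⁻¹, by positivity, inv_le_one_of_one_le₀ (by linarith), ?_⟩
    rw [← div_eq_mul_inv, div_le_one (by positivity)]
    linarith
  rw [← Ioc_union_Ioi_eq_Ioi hδ.le]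
  refine IntegrableOn.union ?_ ?_
  · refine Integrable.mono' (integrableOn_const (C := z ^ 2 + |z|) (by simp))
      (((continuousOn_malmstenIntegrand z).mono Ioc_subset_Ioi_self).aestronglyMeasurable
        measurableSet_Ioc) ?_
    filter_upwards [ae_restrict_mem measurableSet_Ioc] with x hx
    exact abs_malmstenIntegrand_le_of_small hx.1 (hx.2.trans hδ1)
      ((mul_le_mul_of_nonneg_left hx.2 (abs_nonneg z)).trans hzδ)
  · have h1 : IntegrableOn (fun x : ℝ => Real.exp (-(z + 1) * x)) (Ioi δ) :=
      exp_neg_integrableOn_Ioi δ (by linarith)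
    have h2 : IntegrableOn (fun x : ℝ => Real.exp (-x)) (Ioi δ) := by
      simpa using exp_neg_integrableOn_Ioi δ one_pos
    refine Integrable.mono' ((h1.add (h2.const_mul (|z| + 1))).const_mul
      (δ * (1 - Real.exp (-δ)))⁻¹)
      (((continuousOn_malmstenIntegrand z).mono (Ioi_subset_Ioi hδ.le)).aestronglyMeasurable
        measurableSet_Ioi) ?_
    filter_upwards [ae_restrict_mem measurableSet_Ioi] with x hx
    exact abs_malmstenIntegrand_le_of_large hδ hx

/-- The difference of consecutive integrals is the Frullani integral of `e^{-x}`, which gives the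
logarithmic form of `Γ (y + 1) = y * Γ y`. -/
lemma integral_malmstenIntegrand_sub {y : ℝ} (hy : 0 < y) :
    (∫ x in Ioi (0 : ℝ), malmstenIntegrand y x) -
      ∫ x in Ioi (0 : ℝ), malmstenIntegrand (y - 1) x = Real.log y := by
  have hi1 := integrableOn_malmstenIntegrand (z := y) (by linarith)
  have hi2 := integrableOn_malmstenIntegrand (z := y - 1) (by linarith)
  have hEq : EqOn (fun x => malmstenIntegrand y x - malmstenIntegrand (y - 1) x)
      (fun x => x⁻¹ • (Real.exp (-(1 * x)) - Real.exp (-(y * x)))) (Ioi 0) := by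
    intro x hx
    have hx0 : x ≠ 0 := (mem_Ioi.1 hx).ne'
    have he : Real.exp x - 1 ≠ 0 := (sub_pos.2 (Real.one_lt_exp_iff.2 hx)).ne'
    have h1 : Real.exp (-((y - 1) * x)) = Real.exp (-(y * x)) * Real.exp x := by
      rw [← Real.exp_add]; ring_nf
    simp only [malmstenIntegrand, smul_eq_mul, one_mul, neg_mul, h1]
    rw [Real.exp_neg x]
    field_simp
    ring
  rw [← integral_sub hi1 hi2, setIntegral_congr_fun measurableSet_Ioi hEq]
  have hcont : Continuous fun x : ℝ => Real.exp (-x) := by fun_prop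
  rw [Frullani.integral_Ioi_eq (f := fun x => Real.exp (-x)) (L := 1) (R := 0)
    (hcont.locallyIntegrable.locallyIntegrableOn _) one_pos hy
    (by simpa using (hcont.tendsto 0).mono_left nhdsWithin_le_nhds)
    Real.tendsto_exp_neg_atTop_nhds_zero
    ((hi1.sub hi2).congr_fun hEq measurableSet_Ioi)]
  simp

/-- The integrand is convex in `z`: a convex exponential plus an affine function of `z`, divided by
a positive factor free of `z`. -/
lemma malmstenIntegrand_convex {x : ℝ} (hx : 0 < x) {u v a b : ℝ} (ha : 0 ≤ a) (hb : 0 ≤ b)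
    (hab : a + b = 1) :
    malmstenIntegrand (a * u + b * v) x ≤ a * malmstenIntegrand u x + b * malmstenIntegrand v x := by
  have hD := mul_exp_sub_one_pos hx
  have h := convexOn_exp.2 (mem_univ (-u * x)) (mem_univ (-v * x)) ha hb hab
  simp only [smul_eq_mul] at h
  simp only [malmstenIntegrand]
  rw [← mul_div_assoc, ← mul_div_assoc, ← add_div]
  gcongr
  rw [show -(a * u + b * v) * x = a * (-u * x) + b * (-v * x) by ring]
  linear_combination h + hab

theorem convexOn_integral_malmstenIntegrand :
    ConvexOn ℝ (Ioi 0) fun y => ∫ x in Ioi (0 : ℝ), malmstenIntegrand (y - 1) x := by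
  refine ⟨convex_Ioi 0, fun u hu v hv a b ha hb hab => ?_⟩
  have hw : a • u + b • v ∈ Ioi (0 : ℝ) := convex_Ioi 0 hu hv ha hb hab
  have hint : ∀ y ∈ Ioi (0 : ℝ), IntegrableOn (malmstenIntegrand (y - 1)) (Ioi 0) := fun y hy =>
    integrableOn_malmstenIntegrand (by linarith [mem_Ioi.1 hy])
  simp only [smul_eq_mul] at hw ⊢
  rw [← integral_const_mul, ← integral_const_mul,
    ← integral_add ((hint u hu).const_mul a) ((hint v hv).const_mul b)]
  refine setIntegral_mono_on (hint _ hw)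
    (((hint u hu).const_mul a).add ((hint v hv).const_mul b)) measurableSet_Ioi fun x hx => ?_
  have h := malmstenIntegrand_convex hx (u := u - 1) (v := v - 1) ha hb hab
  rwa [show a * (u - 1) + b * (v - 1) = a * u + b * v - 1 by linear_combination -hab] at h

/-- Malmsten's integral representation: for every real `z > 0`,
`ln Γ(1+z) = ∫₀^∞ (e^{-zx} + z(1 - e^{-x}) - 1)/(x(eˣ-1)) dx`. -/
theorem malmsten_integral (z : ℝ) (hz : 0 < z) :
    Real.log (Real.Gamma (1 + z)) =
      ∫ x in Ioi (0 : ℝ),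
        (Real.exp (-z * x) + z * (1 - Real.exp (-x)) - 1) / (x * (Real.exp x - 1)) := by
  have key : EqOn (fun y => Real.exp (∫ x in Ioi (0 : ℝ), malmstenIntegrand (y - 1) x))
      Real.Gamma (Ioi 0) := by
    refine Real.eq_Gamma_of_log_convex ?_ ?_ ?_ ?_
    · simpa [Function.comp_def] using convexOn_integral_malmstenIntegrand
    · intro y hy
      rw [add_sub_cancel_right, ← sub_add_cancel (∫ x in Ioi (0 : ℝ), malmstenIntegrand y x)
        (∫ x in Ioi (0 : ℝ), malmstenIntegrand (y - 1) x), integral_malmstenIntegrand_sub hy,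
        Real.exp_add, Real.exp_log hy]
    · intro y _
      exact Real.exp_pos _
    · simp [malmstenIntegrand]
  have h := key (show 1 + z ∈ Ioi (0 : ℝ) by simp; linarith)
  simp only [add_sub_cancel_left] at h
  rw [← h, Real.log_exp]
  rfl
end

section
/- For every real a with 0 < |a| < 1, ∫₀^∞ (e^{ax} + e^{-ax} - 2) / (x(eˣ - 1)) dx = -ln( sin(πa)/(πa) ). -/
/-!
Expanding `1 / (eˣ - 1) = ∑ e^{-(n+1)x}` over `n ≥ 0` turns the integrand into a series of
nonnegative functions (`e^{ax} + e^{-ax} ≥ 2`). Its `n`-th term is a sum of two Frullani integrands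
for `e^{-x}`, and integrates to `log (m / (m - a)) + log (m / (m + a)) = -log (1 - a² / m²)`, where
`m = n + 1`. Euler's product `sin (πa) / (πa) = ∏ (1 - a² / m²)` shows that these
integrals are summable, which justifies termwise integration, and also gives the value of their sum.
-/

open Real Set

lemma integrableOn_frullani_exp_s12 {p q : ℝ} (hp : 0 < p) (hq : 0 < q) :
    MeasureTheory.IntegrableOn
      (fun x : ℝ => x⁻¹ • (Real.exp (-(p * x)) - Real.exp (-(q * x)))) (Ioi 0) := by
  have h1 := integrableOn_exp_mul_Ioi (neg_lt_zero.mpr hp) 0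
  have h2 := integrableOn_exp_mul_Ioi (neg_lt_zero.mpr hq) 0
  refine MeasureTheory.Integrable.mono' ((h1.add h2).const_mul |q - p|) (by fun_prop) ?_
  filter_upwards [MeasureTheory.ae_restrict_mem measurableSet_Ioi] with x hx
  have hx : 0 < x := hx
  -- The tangent-line bound `r - s ≤ r (log r - log s)` for `r = e^{-ux}`, `s = e^{-vx}`.
  have key : ∀ u v : ℝ,
      Real.exp (-(u * x)) - Real.exp (-(v * x)) ≤ Real.exp (-(u * x)) * ((v - u) * x) := by
    intro u v
    have e : Real.exp (-(v * x)) = Real.exp (-(u * x)) * Real.exp (-((v - u) * x)) := by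
      rw [← Real.exp_add]; ring_nf
    have := Real.add_one_le_exp (-((v - u) * x))
    rw [e]
    nlinarith [Real.exp_pos (-(u * x))]
  have k1 := key p q
  have k2 := key q p
  have ep := Real.exp_pos (-(p * x))
  have eq' := Real.exp_pos (-(q * x))
  have b1 : (q - p) * x ≤ |q - p| * x := mul_le_mul_of_nonneg_right (le_abs_self _) hx.le
  have b2 : (p - q) * x ≤ |q - p| * x :=
    mul_le_mul_of_nonneg_right (by rw [abs_sub_comm]; exact le_abs_self _) hx.le
  have b0 : 0 ≤ |q - p| * x := by positivity
  simp only [smul_eq_mul, Pi.add_apply, neg_mul]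
  rw [Real.norm_eq_abs, abs_mul, abs_of_pos (inv_pos.mpr hx), inv_mul_le_iff₀ hx, abs_le]
  constructor <;> nlinarith [mul_le_mul_of_nonneg_left b1 ep.le,
    mul_le_mul_of_nonneg_left b2 eq'.le, mul_nonneg ep.le b0, mul_nonneg eq'.le b0]

lemma integral_frullani_exp_s12 {p q : ℝ} (hp : 0 < p) (hq : 0 < q) :
    ∫ x in Ioi (0 : ℝ), x⁻¹ • (Real.exp (-(p * x)) - Real.exp (-(q * x))) = Real.log (q / p) := by
  have hc : Continuous fun x : ℝ => Real.exp (-x) := by fun_prop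
  have := Frullani.integral_Ioi_eq (f := fun x : ℝ => Real.exp (-x)) (L := 1) (R := 0)
    (hc.locallyIntegrable.locallyIntegrableOn _) hp hq
    ((by simpa using hc.tendsto 0 : Filter.Tendsto (fun x : ℝ => Real.exp (-x)) (nhds 0)
      (nhds 1)).mono_left nhdsWithin_le_nhds)
    Real.tendsto_exp_neg_atTop_nhds_zero (integrableOn_frullani_exp_s12 hp hq)
  simpa using this

/-- The logarithm of Euler's sine product. -/
lemma hasSum_neg_log_one_sub_div_sq (a : ℝ) (ha : 0 < |a|) (ha1 : |a| < 1) :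
    HasSum (fun n : ℕ => -Real.log (1 - a ^ 2 / ((n : ℝ) + 1) ^ 2))
      (-Real.log (Real.sin (π * a) / (π * a))) := by
  have ha0 : a ≠ 0 := abs_pos.mp ha
  have hpa : π * a ≠ 0 := mul_ne_zero Real.pi_ne_zero ha0
  have hsq : a ^ 2 < 1 := (sq_lt_one_iff_abs_lt_one a).mpr ha1
  have hpos : ∀ n : ℕ, 0 < 1 - a ^ 2 / ((n : ℝ) + 1) ^ 2 := by
    intro n
    rw [sub_pos, div_lt_one (by positivity)]
    have : (0 : ℝ) ≤ n := n.cast_nonneg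
    nlinarith
  rw [hasSum_iff_tendsto_nat_of_nonneg]
  · have hsin : Real.sin (π * a) ≠ 0 := by
      intro h
      obtain ⟨k, hk⟩ := Real.sin_eq_zero_iff.mp h
      have hka : (k : ℝ) = a := by
        rw [mul_comm] at hk
        exact mul_left_cancel₀ Real.pi_ne_zero hk
      rw [← hka] at ha ha1
      have h1 : |k| < 1 := by exact_mod_cast ha1
      have h2 : 0 < |k| := by exact_mod_cast ha
      omega
    have ht := (Real.tendsto_euler_sin_prod a).div_const (π * a)
    have hl := ((Real.continuousAt_log (div_ne_zero hsin hpa)).tendsto.comp ht).neg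
    refine hl.congr fun n => ?_
    simp only [Function.comp_apply]
    rw [mul_div_cancel_left₀ _ hpa, Real.log_prod fun i _ => (hpos i).ne',
      Finset.sum_neg_distrib]
  · intro n
    have : 0 ≤ a ^ 2 / ((n : ℝ) + 1) ^ 2 := by positivity
    have := Real.log_nonpos (hpos n).le (by linarith)
    linarith

/-- For every real `a` with `0 < |a| < 1`,
`∫₀^∞ (e^{ax} + e^{-ax} - 2)/(x(eˣ-1)) dx = -ln(sin(πa)/(πa))`. -/
theorem integral_eq_neg_log_sinc (a : ℝ) (ha : 0 < |a|) (ha1 : |a| < 1) :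
    (∫ x in Ioi (0 : ℝ),
        (Real.exp (a * x) + Real.exp (-a * x) - 2) / (x * (Real.exp x - 1))) =
      -Real.log (Real.sin (π * a) / (π * a)) := by
  obtain ⟨hl, hu⟩ := abs_lt.mp ha1
  have hm : ∀ n : ℕ, (0 : ℝ) < n + 1 := fun n => by positivity
  have hm1 : ∀ n : ℕ, (0 : ℝ) < n + 1 - a := fun n => by
    have : (0 : ℝ) ≤ n := n.cast_nonneg
    linarith
  have hm2 : ∀ n : ℕ, (0 : ℝ) < n + 1 + a := fun n => by
    have : (0 : ℝ) ≤ n := n.cast_nonneg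
    linarith
  let F : ℕ → ℝ → ℝ := fun n x =>
    x⁻¹ • (Real.exp (-(((n : ℝ) + 1 - a) * x)) - Real.exp (-(((n : ℝ) + 1) * x))) +
    x⁻¹ • (Real.exp (-(((n : ℝ) + 1 + a) * x)) - Real.exp (-(((n : ℝ) + 1) * x)))
  have hF : ∀ n x, F n x =
      (Real.exp (a * x) + Real.exp (-a * x) - 2) / x * Real.exp (-x) * Real.exp (-x) ^ n := by
    intro n x
    have e0 : Real.exp (-(((n : ℝ) + 1) * x)) = Real.exp (-x) * Real.exp (-x) ^ n := by
      rw [← Real.exp_nat_mul, ← Real.exp_add]; ring_nf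
    have e1 : Real.exp (-(((n : ℝ) + 1 - a) * x)) =
        Real.exp (a * x) * Real.exp (-(((n : ℝ) + 1) * x)) := by
      rw [← Real.exp_add]; ring_nf
    have e2 : Real.exp (-(((n : ℝ) + 1 + a) * x)) =
        Real.exp (-a * x) * Real.exp (-(((n : ℝ) + 1) * x)) := by
      rw [← Real.exp_add]; ring_nf
    simp only [F, smul_eq_mul]
    rw [e1, e2, e0]
    ring
  have hint : ∀ n, MeasureTheory.IntegrableOn (F n) (Ioi 0) := fun n =>
    (integrableOn_frullani_exp_s12 (hm1 n) (hm n)).add (integrableOn_frullani_exp_s12 (hm2 n) (hm n))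
  have hval : ∀ n, ∫ x in Ioi (0 : ℝ), F n x = -Real.log (1 - a ^ 2 / ((n : ℝ) + 1) ^ 2) := by
    intro n
    have h0 := hm n
    have h1 := hm1 n
    have h2 := hm2 n
    simp only [F]
    rw [MeasureTheory.integral_add (integrableOn_frullani_exp_s12 h1 h0)
      (integrableOn_frullani_exp_s12 h2 h0), integral_frullani_exp_s12 h1 h0, integral_frullani_exp_s12 h2 h0,
      ← Real.log_mul (by positivity) (by positivity), ← Real.log_inv]
    congr 1
    have : (1 - a ^ 2 / ((n : ℝ) + 1) ^ 2) =
        (((n : ℝ) + 1 - a) * (n + 1 + a)) / ((n : ℝ) + 1) ^ 2 := by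
      field_simp
      ring
    rw [this, inv_div]
    field_simp
  have hnorm : ∀ n, ∫ x in Ioi (0 : ℝ), ‖F n x‖ = ∫ x in Ioi (0 : ℝ), F n x := by
    intro n
    refine MeasureTheory.setIntegral_congr_fun measurableSet_Ioi fun x hx => ?_
    have hx : 0 < x := hx
    refine Real.norm_of_nonneg ?_
    rw [hF]
    have h1 := Real.add_one_le_exp (a * x)
    have h2 := Real.add_one_le_exp (-a * x)
    have : 0 ≤ Real.exp (a * x) + Real.exp (-a * x) - 2 := by linarith
    positivity
  have hs := hasSum_neg_log_one_sub_div_sq a ha ha1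
  have hsum := MeasureTheory.hasSum_integral_of_summable_integral_norm hint
    (by simp only [hnorm, hval]; exact hs.summable)
  simp only [hval] at hsum
  rw [← hsum.unique hs]
  refine MeasureTheory.setIntegral_congr_fun measurableSet_Ioi fun x hx => ?_
  have hx : 0 < x := hx
  have hlt : Real.exp (-x) < 1 := Real.exp_lt_one_iff.mpr (by linarith)
  have hgt : 1 < Real.exp x := Real.one_lt_exp_iff.mpr hx
  simp only [hF]
  rw [tsum_mul_left, tsum_geometric_of_lt_one (Real.exp_pos _).le hlt, Real.exp_neg x]
  have h1 : Real.exp x - 1 ≠ 0 := by linarith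
  have h2 : 1 - (Real.exp x)⁻¹ = (Real.exp x - 1) / Real.exp x := by
    field_simp
  rw [h2]
  field_simp
end

section
/- For all real α, β, γ with α < 0, β > 0, γ > 0 and t := α + β + γ > 0, the function x ↦ F(x;α,β,γ)/(x(eˣ - 1)) is integrable on (0,∞), where F(x;α,β,γ) = [sinh(x(α-2t)/(4t))/sinh(xα/(4t))]·[sinh(x(β-2t)/(4t))/sinh(xβ/(4t))]·[sinh(x(γ-2t)/(4t))/sinh(xγ/(4t))] - (α-2t)(β-2t)(γ-2t)/(αβγ). -/
open Real Set

/-!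
Put `t = α + β + γ` and `p = α/(4t), β/(4t), γ/(4t)`, so that the three values of `p` sum to `1/4`
and the integrand is built from the ratios `sinh ((p - 1/2) x) / sinh (p x)`. Since
`sinh y = y + O(y³)`, each ratio equals its limit `(p - 1/2)/p` up to `O(x²)` at `0`
(`sinh_ratio_sub_isBigO`); hence so does the product, and dividing by `x (eˣ - 1) ≥ x²` leaves a
function bounded near `0`. At infinity each ratio is `O(exp ((|p - 1/2| - |p|) x))`
(`sinh_ratio_isBigO_atTop`). The exponent is `1/2` for the negative `p` and
`max (1/2 - 2p) (-1/2)` for a positive one, so the three add up to less than `1`, and the factor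
`1/(x (eˣ - 1)) = O(e⁻ˣ)` makes the integrand decay exponentially.
-/

open Filter Asymptotics Topology MeasureTheory

lemma sinh_sub_self_isBigO : (fun x : ℝ => sinh x - x) =O[𝓝 0] fun x => x ^ 3 := by
  have h := Real.exp_sub_sum_range_isBigO_pow 3
  have hneg : Tendsto (fun x : ℝ => -x) (𝓝 0) (𝓝 0) := by
    simpa using (continuous_neg (G := ℝ)).tendsto 0
  have h' : (fun x : ℝ => exp (-x) - ∑ i ∈ Finset.range 3, (-x) ^ i / (i.factorial : ℝ))
      =O[𝓝 0] fun x => x ^ 3 := by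
    refine (h.comp_tendsto hneg).trans (IsBigO.of_bound 1 (Eventually.of_forall fun x => ?_))
    simp
  refine ((h.sub h').const_mul_left (1 / 2)).congr_left fun x => ?_
  simp [Finset.sum_range_succ, Real.sinh_eq, Nat.factorial]
  ring

lemma abs_le_abs_sinh (y : ℝ) : |y| ≤ |sinh y| := by
  rw [Real.abs_sinh]
  exact Real.self_le_sinh_iff.2 (abs_nonneg y)

/-- The ratio of two hyperbolic sines is even, so it agrees with its limit at `0` to second
order. -/
lemma sinh_ratio_sub_isBigO (q : ℝ) {p : ℝ} (hp : p ≠ 0) :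
    (fun x : ℝ => sinh (x * q) / sinh (x * p) - q / p) =O[𝓝[>] 0] fun x => x ^ 2 := by
  have key (r : ℝ) : (fun x : ℝ => sinh (x * r) - x * r) =O[𝓝[>] 0] fun x => x ^ 3 := by
    have ht : Tendsto (fun x : ℝ => x * r) (𝓝[>] 0) (𝓝 0) := by
      have : Tendsto (fun x : ℝ => x * r) (𝓝 0) (𝓝 (0 * r)) :=
        (continuous_mul_const r).tendsto 0
      rw [zero_mul] at this
      exact this.mono_left nhdsWithin_le_nhds
    refine (sinh_sub_self_isBigO.comp_tendsto ht).trans (IsBigO.of_bound (|r| ^ 3) ?_)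
    refine Eventually.of_forall fun x => ?_
    simp [mul_pow, mul_comm]
  have hnum : (fun x : ℝ => p * (sinh (x * q) - x * q) - q * (sinh (x * p) - x * p))
      =O[𝓝[>] 0] fun x => x ^ 3 :=
    ((key q).const_mul_left p).sub ((key p).const_mul_left q)
  have hden : (fun x : ℝ => (p * sinh (x * p))⁻¹) =O[𝓝[>] 0] fun x => x⁻¹ := by
    refine IsBigO.of_bound ((|p| * |p|)⁻¹) ?_
    filter_upwards [self_mem_nhdsWithin] with x hx
    have hx : 0 < x := hx
    have h1 := abs_le_abs_sinh (x * p)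
    have hp' : 0 < |p| := abs_pos.2 hp
    rw [norm_inv, norm_inv, norm_mul, ← mul_inv]
    simp only [Real.norm_eq_abs]
    rw [abs_mul] at h1
    have hx' : 0 < |x| := abs_pos.2 hx.ne'
    apply inv_anti₀ (by positivity)
    nlinarith
  refine (hnum.mul hden).congr' ?_ ?_
  · filter_upwards [self_mem_nhdsWithin] with x hx
    have hs : sinh (x * p) ≠ 0 := by
      rw [Ne, Real.sinh_eq_zero]
      exact mul_ne_zero (ne_of_gt hx) hp
    rw [← div_eq_mul_inv, div_sub_div _ _ hs hp, mul_comm p (sinh (x * p))]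
    congr 1
    ring
  · filter_upwards [self_mem_nhdsWithin] with x hx
    have : x ≠ 0 := ne_of_gt hx
    field_simp

lemma sinh_ratio_isBigO_atTop (q : ℝ) {p : ℝ} (hp : p ≠ 0) :
    (fun x : ℝ => sinh (x * q) / sinh (x * p)) =O[atTop] fun x => exp ((|q| - |p|) * x) := by
  refine IsBigO.of_bound 4 ?_
  have hp' : 0 < |p| := abs_pos.2 hp
  filter_upwards [eventually_ge_atTop |p|⁻¹, eventually_ge_atTop 0] with x hx hx0
  have h1 : 1 ≤ x * |p| := by
    rwa [inv_eq_one_div, div_le_iff₀ hp'] at hx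
  have hd : exp (x * |p|) / 4 ≤ sinh (x * |p|) := by
    have e1 : exp (-(x * |p|)) ≤ 1 := Real.exp_le_one_iff.2 (by linarith)
    have e2 := Real.add_one_le_exp (x * |p|)
    rw [Real.sinh_eq]
    linarith
  have hn : sinh (x * |q|) ≤ exp (x * |q|) := by
    have e1 := Real.exp_pos (-(x * |q|))
    have e2 := Real.exp_pos (x * |q|)
    rw [Real.sinh_eq]
    linarith
  rw [norm_div, Real.norm_eq_abs, Real.norm_eq_abs, Real.norm_eq_abs, Real.abs_sinh,
    Real.abs_sinh, abs_mul, abs_mul, abs_of_nonneg hx0, Real.abs_exp, sub_mul, Real.exp_sub,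
    mul_comm |q|, mul_comm |p|]
  calc sinh (x * |q|) / sinh (x * |p|) ≤ exp (x * |q|) / (exp (x * |p|) / 4) := by gcongr
    _ = 4 * (exp (x * |q|) / exp (x * |p|)) := by field_simp

/-- The integrability criterion used below, for ratios with arbitrary parameters: only the total
growth exponent matters. -/
lemma integrableOn_sinh_ratio_prod {p₁ p₂ p₃ q₁ q₂ q₃ : ℝ} (h₁ : p₁ ≠ 0) (h₂ : p₂ ≠ 0)
    (h₃ : p₃ ≠ 0) (hE : (|q₁| - |p₁|) + (|q₂| - |p₂|) + (|q₃| - |p₃|) < 1) :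
    IntegrableOn (fun x : ℝ =>
      (sinh (x * q₁) / sinh (x * p₁) * (sinh (x * q₂) / sinh (x * p₂)) *
        (sinh (x * q₃) / sinh (x * p₃)) - q₁ / p₁ * (q₂ / p₂) * (q₃ / p₃)) /
        (x * (exp x - 1))) (Ioi 0) := by
  set f : ℝ → ℝ := fun x : ℝ =>
      (sinh (x * q₁) / sinh (x * p₁) * (sinh (x * q₂) / sinh (x * p₂)) *
        (sinh (x * q₃) / sinh (x * p₃)) - q₁ / p₁ * (q₂ / p₂) * (q₃ / p₃)) /
        (x * (exp x - 1)) with hf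
  have hcont : ContinuousOn f (Ioi 0) := by
    have hr (q p : ℝ) (hp : p ≠ 0) :
        ContinuousOn (fun x : ℝ => sinh (x * q) / sinh (x * p)) (Ioi 0) := by
      refine ContinuousOn.div (by fun_prop) (by fun_prop) fun x hx => ?_
      rw [Ne, Real.sinh_eq_zero]
      exact mul_ne_zero (ne_of_gt hx) hp
    refine ContinuousOn.div ((((hr q₁ p₁ h₁).mul (hr q₂ p₂ h₂)).mul (hr q₃ p₃ h₃)).sub
      continuousOn_const) (by fun_prop) fun x hx => ?_
    have hx : 0 < x := hx
    have := Real.add_one_le_exp x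
    exact mul_ne_zero hx.ne' (by linarith)
  have hzero : f =O[𝓝[>] 0] fun _ => (1 : ℝ) := by
    have hlim : Tendsto (fun x : ℝ => x ^ 2) (𝓝[>] 0) (𝓝 0) := by
      have : Tendsto (fun x : ℝ => x ^ 2) (𝓝 0) (𝓝 (0 ^ 2)) := (continuous_pow 2).tendsto 0
      rw [zero_pow two_ne_zero] at this
      exact this.mono_left nhdsWithin_le_nhds
    have hO (q p : ℝ) (hp : p ≠ 0) :
        (fun x : ℝ => sinh (x * q) / sinh (x * p)) =O[𝓝[>] 0] fun _ => (1 : ℝ) := by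
      have h := ((sinh_ratio_sub_isBigO q hp).trans (hlim.isBigO_one ℝ)).add
        (isBigO_const_const (q / p) (one_ne_zero (α := ℝ)) (𝓝[>] (0 : ℝ)))
      simpa using h
    -- Telescoping: the factors are replaced by their limits one at a time.
    have hT := ((((sinh_ratio_sub_isBigO q₁ h₁).mul (hO q₂ p₂ h₂)).mul (hO q₃ p₃ h₃)).add
      (((sinh_ratio_sub_isBigO q₂ h₂).mul (hO q₃ p₃ h₃)).const_mul_left (q₁ / p₁) |>.congr_right
        (g₂ := fun x : ℝ => x ^ 2 * 1 * 1) fun x => by ring)).add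
      ((sinh_ratio_sub_isBigO q₃ h₃).const_mul_left (q₁ / p₁ * (q₂ / p₂)) |>.congr_right
        (g₂ := fun x : ℝ => x ^ 2 * 1 * 1) fun x => by ring)
    have hden : (fun x : ℝ => (x * (exp x - 1))⁻¹) =O[𝓝[>] 0] fun x => (x ^ 2)⁻¹ := by
      refine IsBigO.of_bound 1 ?_
      filter_upwards [self_mem_nhdsWithin] with x hx
      have hx : 0 < x := hx
      have h1 := Real.add_one_le_exp x
      have h2 : x ^ 2 ≤ x * (exp x - 1) := by nlinarith
      have h3 : 0 < x ^ 2 := by positivity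
      rw [one_mul, norm_inv, norm_inv, Real.norm_of_nonneg h3.le,
        Real.norm_of_nonneg (h3.le.trans h2)]
      exact inv_anti₀ h3 h2
    refine (hT.mul hden).congr' ?_ ?_
    · refine Eventually.of_forall fun x => ?_
      simp only [hf, div_eq_mul_inv _ (x * (exp x - 1))]
      ring
    · filter_upwards [self_mem_nhdsWithin] with x hx
      have : x ≠ 0 := ne_of_gt hx
      field_simp
  set E := (|q₁| - |p₁|) + (|q₂| - |p₂|) + (|q₃| - |p₃|) with hEdef
  have hE' : max E 0 < 1 := max_lt hE one_pos
  have htop : f =O[atTop] fun x => exp (-(1 - max E 0) * x) := by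
    have hprod := ((sinh_ratio_isBigO_atTop q₁ h₁).mul (sinh_ratio_isBigO_atTop q₂ h₂)).mul
      (sinh_ratio_isBigO_atTop q₃ h₃)
    have hnum : (fun x : ℝ => sinh (x * q₁) / sinh (x * p₁) * (sinh (x * q₂) / sinh (x * p₂)) *
        (sinh (x * q₃) / sinh (x * p₃)) - q₁ / p₁ * (q₂ / p₂) * (q₃ / p₃))
        =O[atTop] fun x => exp (max E 0 * x) := by
      refine IsBigO.sub (hprod.trans ?_) ?_
      · refine IsBigO.of_bound 1 ?_
        filter_upwards [eventually_ge_atTop 0] with x hx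
        rw [← Real.exp_add, ← Real.exp_add, one_mul, Real.norm_eq_abs, Real.norm_eq_abs,
          Real.abs_exp, Real.abs_exp, Real.exp_le_exp, ← add_mul, ← add_mul]
        exact mul_le_mul_of_nonneg_right (le_max_left _ _) hx
      · refine IsBigO.of_bound |q₁ / p₁ * (q₂ / p₂) * (q₃ / p₃)| ?_
        filter_upwards [eventually_ge_atTop 0] with x hx
        rw [Real.norm_eq_abs, Real.norm_eq_abs, Real.abs_exp]
        exact le_mul_of_one_le_right (abs_nonneg _)
          (Real.one_le_exp (mul_nonneg (le_max_right _ _) hx))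
    have hden : (fun x : ℝ => (x * (exp x - 1))⁻¹) =O[atTop] fun x => exp (-x) := by
      refine IsBigO.of_bound 2 ?_
      filter_upwards [eventually_ge_atTop 1] with x hx
      have h1 := Real.add_one_le_exp x
      have h2 : exp x / 2 ≤ x * (exp x - 1) := by nlinarith
      have h3 : 0 < exp x / 2 := by positivity
      rw [norm_inv, Real.norm_of_nonneg (h3.le.trans h2), Real.norm_eq_abs, Real.abs_exp]
      calc (x * (exp x - 1))⁻¹ ≤ (exp x / 2)⁻¹ := inv_anti₀ h3 h2
        _ = 2 * exp (-x) := by rw [Real.exp_neg, inv_div]; ring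
    refine (hnum.mul hden).congr (fun x => ?_) fun x => ?_
    · rw [hf]
      exact (div_eq_mul_inv _ _).symm
    · rw [← Real.exp_add]
      congr 1
      ring
  have hmeas : StronglyMeasurableAtFilter f (𝓝[>] 0) :=
    ⟨Ioi 0, self_mem_nhdsWithin, hcont.aestronglyMeasurable measurableSet_Ioi⟩
  have hfin : (volume : Measure ℝ).FiniteAtFilter (𝓝[>] 0) :=
    (volume.finiteAt_nhds (0 : ℝ)).filter_mono nhdsWithin_le_nhds
  obtain ⟨s, hs, hsi⟩ := hzero.integrableAtFilter hmeas
    (⟨_, hfin.choose_spec.1, integrableOn_const hfin.choose_spec.2.ne⟩)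
  obtain ⟨ε, hε, hεs⟩ := mem_nhdsGT_iff_exists_Ioc_subset.1 hs
  rw [← Ioc_union_Ioi_eq_Ioi (le_of_lt hε)]
  exact (hsi.mono_set hεs).union (integrable_of_isBigO_exp_neg (sub_pos.2 hE')
    (hcont.mono fun x (hx : ε ≤ x) => (show 0 < ε from hε).trans_le hx) htop)

/-- For all real `α, β, γ` with `α < 0`, `β > 0`, `γ > 0` and `t := α+β+γ > 0`,
the function `x ↦ F(x;α,β,γ)/(x(eˣ-1))` is integrable on `(0,∞)`, where
`F(x;α,β,γ) = [sinh(x(α-2t)/(4t))/sinh(xα/(4t))]·[sinh(x(β-2t)/(4t))/sinh(xβ/(4t))]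
  ·[sinh(x(γ-2t)/(4t))/sinh(xγ/(4t))] - (α-2t)(β-2t)(γ-2t)/(αβγ)`. -/
theorem universal_integrand_integrable (α β γ : ℝ) (hα : α < 0) (hβ : 0 < β)
    (hγ : 0 < γ) (ht : 0 < α + β + γ) :
    MeasureTheory.IntegrableOn
      (fun x : ℝ =>
        (Real.sinh (x * (α - 2 * (α + β + γ)) / (4 * (α + β + γ))) /
            Real.sinh (x * α / (4 * (α + β + γ))) *
          (Real.sinh (x * (β - 2 * (α + β + γ)) / (4 * (α + β + γ))) /
            Real.sinh (x * β / (4 * (α + β + γ)))) *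
          (Real.sinh (x * (γ - 2 * (α + β + γ)) / (4 * (α + β + γ))) /
            Real.sinh (x * γ / (4 * (α + β + γ)))) -
          (α - 2 * (α + β + γ)) * (β - 2 * (α + β + γ)) * (γ - 2 * (α + β + γ)) /
            (α * β * γ)) /
          (x * (Real.exp x - 1)))
      (Ioi (0 : ℝ)) := by
  set t := α + β + γ with htdef
  have hne : t ≠ 0 := ht.ne'
  -- All parameters are rescaled by `4t`; the numerators `(α - 2t)/(4t)` are `p - 1/2`.
  have hsum : α / (4 * t) + β / (4 * t) + γ / (4 * t) = 1 / 4 := by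
    rw [← add_div, ← add_div, ← htdef]
    field_simp
  have hshift (a : ℝ) : (a - 2 * t) / (4 * t) = a / (4 * t) - 1 / 2 := by
    field_simp
    ring
  have ha : α / (4 * t) < 0 := div_neg_of_neg_of_pos hα (by positivity)
  have hb : 0 < β / (4 * t) := by positivity
  have hc : 0 < γ / (4 * t) := by positivity
  have hE : (|(α - 2 * t) / (4 * t)| - |α / (4 * t)|) +
      (|(β - 2 * t) / (4 * t)| - |β / (4 * t)|) +
      (|(γ - 2 * t) / (4 * t)| - |γ / (4 * t)|) < 1 := by
    rw [hshift, hshift, hshift, abs_of_neg ha, abs_of_pos hb, abs_of_pos hc,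
      abs_of_neg (by linarith : α / (4 * t) - 1 / 2 < 0)]
    rcases abs_cases (β / (4 * t) - 1 / 2) with ⟨h1, _⟩ | ⟨h1, _⟩ <;>
      rcases abs_cases (γ / (4 * t) - 1 / 2) with ⟨h2, _⟩ | ⟨h2, _⟩ <;> linarith
  have h := integrableOn_sinh_ratio_prod ha.ne hb.ne' hc.ne' hE
  have hconst : (α - 2 * t) / (4 * t) / (α / (4 * t)) * ((β - 2 * t) / (4 * t) / (β / (4 * t))) *
      ((γ - 2 * t) / (4 * t) / (γ / (4 * t))) =
      (α - 2 * t) * (β - 2 * t) * (γ - 2 * t) / (α * β * γ) := by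
    have h4 : 4 * t ≠ 0 := by positivity
    rw [div_div_div_cancel_right₀ h4, div_div_div_cancel_right₀ h4,
      div_div_div_cancel_right₀ h4, div_mul_div_comm, div_mul_div_comm]
  rw [hconst] at h
  simpa only [← mul_div_assoc] using h
end

section
/- For every integer n ≥ 2, ∏_{1≤i<j≤n} [sin(π(j-i)/n) / (π(j-i)/n)] = n^{n²/2} · (2π)^{(n-n²)/2} / ∏_{k=1}^{n-1} k!. -/
/-!
Grouping the pairs `i < j` by the difference `d = j - i`, the sines contribute
`S = ∏ d, sin (π d / n) ^ (n - d)`. The reflection `d ↦ n - d` fixes the sines, so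
`S ^ 2 = (∏ d, sin (π d / n)) ^ n`, and `∏ d, 2 sin (π d / n) = ∏ d, |1 - ζ ^ d| = n` for the
primitive root of unity `ζ = exp (2 π i / n)`. The denominators contribute
`(π / n) ^ (n (n - 1) / 2) * ∏ k, k!`. Both sides of the claim are positive, so it suffices to
compare their squares, which removes the half-integral exponents.
-/

open Real

theorem prod_two_mul_sin (N : ℕ) :
    ∏ d ∈ Finset.range N, (2 * Real.sin (π * ((d : ℝ) + 1) / ((N : ℝ) + 1))) = (N : ℝ) + 1 := by
  have hζ := Complex.isPrimitiveRoot_exp (N + 1) (Nat.succ_ne_zero N)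
  have h := congrArg norm hζ.prod_one_sub_pow_eq_order
  rw [norm_prod] at h
  have hR : ‖((N : ℂ) + 1)‖ = (N : ℝ) + 1 := by
    rw [← Nat.cast_succ, Complex.norm_natCast, Nat.cast_succ]
  rw [hR] at h
  refine Eq.trans ?_ h
  refine Finset.prod_congr rfl fun d hd => ?_
  have hd' : (d : ℝ) + 1 ≤ N := by exact_mod_cast Finset.mem_range.1 hd
  have hpos : 0 ≤ Real.sin (π * ((d : ℝ) + 1) / ((N : ℝ) + 1)) := by
    apply Real.sin_nonneg_of_nonneg_of_le_pi (by positivity)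
    rw [div_le_iff₀ (by positivity)]
    exact mul_le_mul_of_nonneg_left (by linarith) pi_pos.le
  have h2 := Complex.norm_exp_I_mul_ofReal_sub_one (2 * (π * ((d : ℝ) + 1) / ((N : ℝ) + 1)))
  rw [mul_div_cancel_left₀ _ (two_ne_zero), Real.norm_of_nonneg (by positivity)] at h2
  rw [← h2, norm_sub_rev, ← Complex.exp_nat_mul]
  congr 3
  push_cast
  ring

/-- In a triangular product the factor `f d` occurs once for each row `m` with `d < m ≤ N`. -/
theorem prod_prod_range_eq (f : ℕ → ℝ) (N : ℕ) :
    ∏ m ∈ Finset.range (N + 1), ∏ d ∈ Finset.range m, f d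
      = ∏ d ∈ Finset.range N, f d ^ (N - d) := by
  induction N with
  | zero => simp
  | succ N ih =>
    rw [Finset.prod_range_succ, ih, Finset.prod_range_succ, Finset.prod_range_succ _ N,
      ← mul_assoc, ← Finset.prod_mul_distrib]
    congr 1
    · refine Finset.prod_congr rfl fun d hd => ?_
      rw [← pow_succ]
      congr 1
      have := Finset.mem_range.1 hd
      omega
    · simp

/-- The reflection argument: multiplying the triangular product by its reflected copy makes all
exponents equal. -/
theorem prod_prod_range_sq (f : ℕ → ℝ) (N : ℕ) (hf : ∀ d < N, f (N - 1 - d) = f d) :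
    (∏ m ∈ Finset.range (N + 1), ∏ d ∈ Finset.range m, f d) ^ 2
      = (∏ d ∈ Finset.range N, f d) ^ (N + 1) := by
  rw [prod_prod_range_eq, sq]
  nth_rewrite 1 [← Finset.prod_range_reflect]
  rw [← Finset.prod_mul_distrib, ← Finset.prod_pow]
  refine Finset.prod_congr rfl fun d hd => ?_
  have := Finset.mem_range.1 hd
  rw [hf d this, ← pow_add]
  congr 1
  omega

/-- The pairs `1 ≤ i < j ≤ N + 1`, parametrized by `m = N + 1 - i` and `d = j - i - 1`. -/
theorem prod_pairs_eq (F : ℝ → ℝ) (N : ℕ) :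
    ∏ i ∈ Finset.Icc 1 (N + 1), ∏ j ∈ Finset.Ioc i (N + 1), F ((j : ℝ) - i)
      = ∏ m ∈ Finset.range (N + 1), ∏ d ∈ Finset.range m, F ((d : ℝ) + 1) := by
  refine Finset.prod_bij' (fun i _ => N + 1 - i) (fun m _ => N + 1 - m) ?_ ?_ ?_ ?_ ?_
  · intro i hi; simp only [Finset.mem_Icc, Finset.mem_range] at *; omega
  · intro i hi; simp only [Finset.mem_Icc, Finset.mem_range] at *; omega
  · intro i hi; simp only [Finset.mem_Icc] at *; omega
  · intro i hi; simp only [Finset.mem_range] at *; omega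
  · intro i hi
    refine Finset.prod_bij' (fun j _ => j - i - 1) (fun d _ => d + i + 1) ?_ ?_ ?_ ?_ ?_
    · intro j hj; simp only [Finset.mem_Ioc, Finset.mem_range] at *; omega
    · intro j hj; simp only [Finset.mem_Ioc, Finset.mem_range] at *; omega
    · intro j hj; simp only [Finset.mem_Ioc] at *; omega
    · intro j hj; simp only [Finset.mem_range] at *; omega
    · intro j hj
      have hj' := Finset.mem_Ioc.1 hj
      congr 1
      rw [Nat.sub_sub, Nat.cast_sub (by omega)]
      push_cast
      ring

/-- For every integer `n ≥ 2`,
`∏_{1≤i<j≤n} sin(π(j-i)/n)/(π(j-i)/n) = n^{n²/2} · (2π)^{(n-n²)/2} / ∏_{k=1}^{n-1} k!`. -/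
theorem su_n_sine_product_value (n : ℕ) (hn : 2 ≤ n) :
    (∏ i ∈ Finset.Icc 1 n, ∏ j ∈ Finset.Ioc i n,
        Real.sin (π * ((j : ℝ) - i) / n) / (π * ((j : ℝ) - i) / n)) =
      (n : ℝ) ^ ((n : ℝ) ^ 2 / 2) * (2 * π) ^ (((n : ℝ) - (n : ℝ) ^ 2) / 2) /
        ∏ k ∈ Finset.Icc 1 (n - 1), (Nat.factorial k : ℝ) := by
  obtain ⟨N, rfl⟩ : ∃ N, n = N + 1 := ⟨n - 1, by omega⟩
  rw [prod_pairs_eq (fun x => Real.sin (π * x / ((N + 1 : ℕ) : ℝ)) / (π * x / ((N + 1 : ℕ) : ℝ)))]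
  have hsplit (f g : ℕ → ℝ) :
      ∏ m ∈ Finset.range (N + 1), ∏ d ∈ Finset.range m, f d / g d
        = (∏ m ∈ Finset.range (N + 1), ∏ d ∈ Finset.range m, f d)
          / ∏ m ∈ Finset.range (N + 1), ∏ d ∈ Finset.range m, g d := by
    simp only [Finset.prod_div_distrib]
  rw [hsplit, Nat.add_sub_cancel, Nat.cast_succ]
  set s : ℕ → ℝ := fun d => Real.sin (π * ((d : ℝ) + 1) / ((N : ℝ) + 1)) with hs
  set x : ℝ := (N : ℝ) + 1 with hx
  have hx0 : 0 < x := by positivity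
  have hS : (∏ m ∈ Finset.range (N + 1), ∏ d ∈ Finset.range m, s d) ^ 2
      = (x / 2 ^ N) ^ (N + 1) := by
    rw [prod_prod_range_sq]
    · congr 1
      have h := prod_two_mul_sin N
      rw [Finset.prod_mul_distrib, Finset.prod_const, Finset.card_range] at h
      rw [eq_div_iff (by positivity), mul_comm]
      exact h
    · intro d hd
      simp only [hs]
      rw [← Real.sin_pi_sub]
      congr 1
      rw [Nat.sub_sub, Nat.cast_sub (by omega)]
      field_simp
      push_cast
      rw [hx]
      ring
  have hS0 : 0 ≤ ∏ m ∈ Finset.range (N + 1), ∏ d ∈ Finset.range m, s d := by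
    refine Finset.prod_nonneg fun m hm => Finset.prod_nonneg fun d hd => ?_
    have h1 := Finset.mem_range.1 hm
    have h2 := Finset.mem_range.1 hd
    have h3 : (d : ℝ) + 1 ≤ x := by
      rw [hx]; exact_mod_cast (by omega : d + 1 ≤ N + 1)
    apply Real.sin_nonneg_of_nonneg_of_le_pi (by positivity)
    rw [div_le_iff₀ (by positivity)]
    exact mul_le_mul_of_nonneg_left h3 pi_pos.le
  have hfac : ∏ m ∈ Finset.range (N + 1), (m.factorial : ℝ)
      = ∏ k ∈ Finset.Icc 1 N, (k.factorial : ℝ) := by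
    rw [Finset.prod_range_succ', ← Finset.Ico_add_one_right_eq_Icc, Finset.prod_Ico_eq_prod_range]
    simp [add_comm]
  have hD : ∏ m ∈ Finset.range (N + 1), ∏ d ∈ Finset.range m, (π * ((d : ℝ) + 1) / x)
      = (∏ m ∈ Finset.range (N + 1), ∏ d ∈ Finset.range m, (π / x))
        * ∏ k ∈ Finset.Icc 1 N, (k.factorial : ℝ) := by
    rw [← hfac, ← Finset.prod_mul_distrib]
    refine Finset.prod_congr rfl fun m _ => ?_
    rw [← Finset.prod_range_add_one_eq_factorial]
    push_cast
    rw [← Finset.prod_mul_distrib]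
    exact Finset.prod_congr rfl fun d _ => by ring
  have hC := prod_prod_range_sq (fun _ => π / x) N (fun _ _ => rfl)
  rw [Finset.prod_const, Finset.card_range, ← pow_mul] at hC
  have hC0 : 0 < ∏ m ∈ Finset.range (N + 1), ∏ d ∈ Finset.range m, (π / x) := by positivity
  have hP0 : 0 < ∏ k ∈ Finset.Icc 1 N, (k.factorial : ℝ) :=
    Finset.prod_pos fun k _ => by positivity
  have hE1 : (x ^ (x ^ 2 / 2)) ^ 2 = x ^ ((N + 1) ^ 2) := by
    rw [← Real.rpow_natCast (x ^ (x ^ 2 / 2)), ← Real.rpow_mul hx0.le,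
      ← Real.rpow_natCast x ((N + 1) ^ 2)]
    congr 1
    push_cast
    rw [hx]; ring
  have hE2 : ((2 * π) ^ ((x - x ^ 2) / 2)) ^ 2 = ((2 * π) ^ (N * (N + 1)))⁻¹ := by
    rw [← Real.rpow_natCast ((2 * π) ^ ((x - x ^ 2) / 2)), ← Real.rpow_mul (by positivity),
      ← Real.rpow_natCast (2 * π) (N * (N + 1)),
      ← Real.rpow_neg (by positivity)]
    congr 1
    push_cast
    rw [hx]; ring
  rw [hD, ← div_div]
  congr 1
  rw [← sq_eq_sq₀ (by positivity) (by positivity), div_pow, mul_pow, hS, hC, hE1, hE2, div_pow,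
    div_pow, ← pow_mul, mul_pow]
  field_simp
  ring
end
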